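/- There exists a map ϱ* as in the main construction (i.e., sending each α ∈ UVB_n to a pure braid ϱ*(α) ∈ UVP_m fused Markov equivalent to α, where m is the number of orbits of ι(α), and with ϱ*(α) = α whenever α is pure) which additionally satisfies: whenever α = βγ with β ∈ UVB_n and γ ∈ [UVP_n, UVP_n], then ϱ*(α) = ϱ*(β)δ for some δ ∈ [UVP_m, UVP_m]. -/

import Mathlib

/-!  Common setup: the unrestricted virtual braid group `UVB n`, its generators
σ_k, ρ_k (1-based indices), the elements λ_{i,j} and B_{i,j}, the permutation
homomorphism ι (characterized by `IsIota`), the section s : S_n → UVB n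
(characterized by `IsPermSection`), and fused Markov equivalence. -/

/-- Generators of the unrestricted virtual braid group `UVB n`:
`Sum.inl i` is the classical generator σ_{i+1} and `Sum.inr i` is the virtual
generator ρ_{i+1}, for `i : Fin (n-1)` (so the 1-based indices are `1, …, n-1`). -/
abbrev UVBGen (n : ℕ) := Sum (Fin (n - 1)) (Fin (n - 1))

namespace UVBGen
def sg {n : ℕ} (i : Fin (n - 1)) : FreeGroup (UVBGen n) := FreeGroup.of (Sum.inl i)
def rg {n : ℕ} (i : Fin (n - 1)) : FreeGroup (UVBGen n) := FreeGroup.of (Sum.inr i)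
end UVBGen

open UVBGen in
/-- The defining relations of the unrestricted virtual braid group. -/
def uvbRels (n : ℕ) : Set (FreeGroup (UVBGen n)) :=
  {r | (∃ i j : Fin (n - 1), (j : ℕ) = (i : ℕ) + 1 ∧
          (r = sg i * sg j * sg i * (sg j * sg i * sg j)⁻¹ ∨
           r = rg i * rg j * rg i * (rg j * rg i * rg j)⁻¹ ∨
           r = rg i * rg j * sg i * (sg j * rg i * rg j)⁻¹ ∨
           r = rg i * sg j * sg i * (sg j * sg i * rg j)⁻¹ ∨
           r = rg j * sg i * sg j * (sg i * sg j * rg i)⁻¹)) ∨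
       (∃ i j : Fin (n - 1), ((i : ℕ) + 2 ≤ (j : ℕ) ∨ (j : ℕ) + 2 ≤ (i : ℕ)) ∧
          (r = sg i * sg j * (sg j * sg i)⁻¹ ∨
           r = rg i * rg j * (rg j * rg i)⁻¹ ∨
           r = sg i * rg j * (rg j * sg i)⁻¹)) ∨
       (∃ i : Fin (n - 1), r = rg i * rg i)}

/-- The unrestricted virtual braid group on `n` strands. -/
abbrev UVB (n : ℕ) := PresentedGroup (uvbRels n)

namespace UVB

/-- The generator σ_k (1-based index; meaningful for `1 ≤ k ≤ n-1`, junk value `1` otherwise). -/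
def sigma (n k : ℕ) : UVB n :=
  if h : 1 ≤ k ∧ k ≤ n - 1 then PresentedGroup.of (Sum.inl ⟨k - 1, by omega⟩) else 1

/-- The generator ρ_k (1-based index; meaningful for `1 ≤ k ≤ n-1`, junk value `1` otherwise). -/
def rho (n k : ℕ) : UVB n :=
  if h : 1 ≤ k ∧ k ≤ n - 1 then PresentedGroup.of (Sum.inr ⟨k - 1, by omega⟩) else 1

/-- The element λ_{i,j} of `UVB n` (1-based indices `1 ≤ i ≠ j ≤ n`; junk value `1` if `i = j`).
For `i < j`:  `λ_{i,j} = ρ_{j-1}⋯ρ_{i+1} · ρ_i σ_i⁻¹ · ρ_{i+1}⋯ρ_{j-1}` and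
`λ_{j,i} = ρ_{j-1}⋯ρ_{i+1} · σ_i⁻¹ ρ_i · ρ_{i+1}⋯ρ_{j-1}`. -/
def lam (n i j : ℕ) : UVB n :=
  if i < j then
    (((List.range' (i + 1) (j - 1 - i)).reverse.map (rho n)).prod) *
      (rho n i * (sigma n i)⁻¹) *
      (((List.range' (i + 1) (j - 1 - i)).map (rho n)).prod)
  else if j < i then
    (((List.range' (j + 1) (i - 1 - j)).reverse.map (rho n)).prod) *
      ((sigma n j)⁻¹ * rho n j) *
      (((List.range' (j + 1) (i - 1 - j)).map (rho n)).prod)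
  else 1

/-- The element `B_{i,j} = ρ_{j-1}ρ_{j-2}⋯ρ_{i+1}ρ_i` for `i < j`, and `1` otherwise. -/
def B (n i j : ℕ) : UVB n :=
  if i < j then ((List.range' i (j - i)).reverse.map (rho n)).prod else 1

/-- The subgroup `U_j` of `UVB n` generated by `{λ_{i,j}, λ_{j,i} : 1 ≤ i < j}`. -/
def U (n j : ℕ) : Subgroup (UVB n) :=
  Subgroup.closure {x | ∃ i, 1 ≤ i ∧ i < j ∧ (x = lam n i j ∨ x = lam n j i)}

end UVB

/-- `ι : UVB n →* S_n` is the homomorphism sending σ_k and ρ_k to the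
transposition (k, k+1) (written 0-based on `Fin n`). -/
def IsIota (n : ℕ) (ι : UVB n →* Equiv.Perm (Fin n)) : Prop :=
  ∀ (k : ℕ) (h1 : 1 ≤ k) (h2 : k ≤ n - 1),
    ι (UVB.sigma n k) = Equiv.swap ⟨k - 1, by omega⟩ ⟨k, by omega⟩ ∧
    ι (UVB.rho n k) = Equiv.swap ⟨k - 1, by omega⟩ ⟨k, by omega⟩

/-- `s : S_n →* UVB n` is the homomorphism sending the transposition (k, k+1) to ρ_k. -/
def IsPermSection (n : ℕ) (s : Equiv.Perm (Fin n) →* UVB n) : Prop :=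
  ∀ (k : ℕ) (h1 : 1 ≤ k) (h2 : k ≤ n - 1),
    s (Equiv.swap ⟨k - 1, by omega⟩ ⟨k, by omega⟩) = UVB.rho n k

/-- The number of orbits of a permutation of `Fin n`
(= number of fixed points + number of nontrivial cycles). -/
def numOrbits {n : ℕ} (π : Equiv.Perm (Fin n)) : ℕ :=
  (Finset.univ.filter fun x => π x = x).card + π.cycleType.card

namespace UVB

private def embedGen (n : ℕ) : UVBGen n → UVBGen (n + 1)
  | Sum.inl i => Sum.inl ⟨i.val, by have := i.isLt; omega⟩
  | Sum.inr i => Sum.inr ⟨i.val, by have := i.isLt; omega⟩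

open UVBGen in
/-- The natural inclusion `UVB n →* UVB (n+1)` (σ_k ↦ σ_k, ρ_k ↦ ρ_k). -/
def incl (n : ℕ) : UVB n →* UVB (n + 1) :=
  PresentedGroup.toGroup (f := fun x => PresentedGroup.of (embedGen n x)) (by
    have key : (FreeGroup.lift fun x => (PresentedGroup.of (embedGen n x) : UVB (n + 1)))
        = (PresentedGroup.mk (uvbRels (n + 1))).comp (FreeGroup.map (embedGen n)) := by
      ext x
      simp [PresentedGroup.of]
    intro r hr
    rw [key]
    simp only [MonoidHom.comp_apply]
    have hmem : FreeGroup.map (embedGen n) r ∈ uvbRels (n + 1) := by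
      have hsg : ∀ i : Fin (n - 1), FreeGroup.map (embedGen n) (sg i)
          = sg (⟨i.val, by have := i.isLt; omega⟩ : Fin (n + 1 - 1)) := by
        intro i; simp [sg, embedGen]
      have hrg : ∀ i : Fin (n - 1), FreeGroup.map (embedGen n) (rg i)
          = rg (⟨i.val, by have := i.isLt; omega⟩ : Fin (n + 1 - 1)) := by
        intro i; simp [rg, embedGen]
      rcases hr with ⟨i, j, hij, hc⟩ | ⟨i, j, hij, hc⟩ | ⟨i, hc⟩
      · refine Or.inl ⟨⟨i.val, by have := i.isLt; omega⟩, ⟨j.val, by have := j.isLt; omega⟩,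
          by simpa using hij, ?_⟩
        rcases hc with h | h | h | h | h <;> subst h <;>
          simp only [map_mul, map_inv, hsg, hrg] <;> tauto
      · refine Or.inr (Or.inl ⟨⟨i.val, by have := i.isLt; omega⟩, ⟨j.val, by have := j.isLt; omega⟩,
          by simpa using hij, ?_⟩)
        rcases hc with h | h | h <;> subst h <;>
          simp only [map_mul, map_inv, hsg, hrg] <;> tauto
      · refine Or.inr (Or.inr ⟨⟨i.val, by have := i.isLt; omega⟩, ?_⟩)
        subst hc
        simp only [map_mul, hsg, hrg]
    exact (QuotientGroup.eq_one_iff _).mpr (Subgroup.subset_normalClosure hmem))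

end UVB

/-- The elementary fused Markov moves on the disjoint union of the groups `UVB n`:
conjugation, and the three right stabilizations (positive, negative, virtual). -/
inductive MarkovBase : (Σ n, UVB n) → (Σ n, UVB n) → Prop
  | conj (n : ℕ) (α γ : UVB n) : MarkovBase ⟨n, α⟩ ⟨n, γ * α * γ⁻¹⟩
  | stabPos (n : ℕ) (α : UVB n) :
      MarkovBase ⟨n, α⟩ ⟨n + 1, UVB.incl n α * UVB.sigma (n + 1) n⟩
  | stabNeg (n : ℕ) (α : UVB n) :
      MarkovBase ⟨n, α⟩ ⟨n + 1, UVB.incl n α * (UVB.sigma (n + 1) n)⁻¹⟩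
  | stabVirt (n : ℕ) (α : UVB n) :
      MarkovBase ⟨n, α⟩ ⟨n + 1, UVB.incl n α * UVB.rho (n + 1) n⟩

/-- Fused Markov equivalence: the smallest equivalence relation generated by the
elementary Markov moves.  By Kamada's theorem, two unrestricted virtual braids are
fused Markov equivalent iff their closures are equivalent fused links. -/
def Markov : (Σ n, UVB n) → (Σ n, UVB n) → Prop := Relation.EqvGen MarkovBase

/-!
The pure group `UVP_n` is generated by the elements `λ_{i,j}`, one for each ordered pair of
strands, which `S_n` permutes and which commute as soon as their unordered pairs of strands differ.
Hence `UVP_{n+2}` is a product of three commuting subgroups: the elements not involving the last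
strand `z`, those linking `z` to a strand other than the penultimate strand `y`, and those linking
`z` to `y`.

If `ι(α)` is nontrivial, a conjugation makes it carry `y` to `z`, and then `α = a ρ_{n+1} v u q`
with `a` in `UVB_{n+1}` and `v`, `u`, `q` in the three subgroups. Conjugation moves `v` to the
front, `ρ_{n+1}` turns `u` into an element of `UVB_{n+1}`, and Markov moves absorb `q`. This leaves
a braid on one strand fewer with the same number of orbits. Both `v` and `u` depend homomorphically
on the pure part, so commutators go to commutators, and the reduction is compatible with the cosets
of `[UVP_n, UVP_n]`. Choosing one representative in each coset then gives the map.
-/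

theorem MarkovBase.markov {x y : Σ n, UVB n} (h : MarkovBase x y) : Markov x y :=
  Relation.EqvGen.rel _ _ h

namespace Markov

theorem symm {x y : Σ n, UVB n} (h : Markov x y) : Markov y x := Relation.EqvGen.symm _ _ h

theorem trans {x y z : Σ n, UVB n} (h : Markov x y) (h' : Markov y z) : Markov x z :=
  Relation.EqvGen.trans _ _ _ h h'

instance : Trans Markov Markov Markov := ⟨Markov.trans⟩

end Markov

namespace UVB

section Relations

variable {n j k : ℕ}

theorem sigma_succ (hk : k + 1 < n) :
    sigma n (k + 1) = PresentedGroup.of (Sum.inl ⟨k, by omega⟩) :=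
  dif_pos ⟨by omega, by omega⟩

theorem rho_succ (hk : k + 1 < n) :
    rho n (k + 1) = PresentedGroup.of (Sum.inr ⟨k, by omega⟩) :=
  dif_pos ⟨by omega, by omega⟩

theorem sigma_eq_one (hk : k = 0 ∨ n ≤ k) : sigma n k = 1 := dif_neg (by omega)

theorem rho_eq_one (hk : k = 0 ∨ n ≤ k) : rho n k = 1 := dif_neg (by omega)

theorem eq_zero_or_le_or_eq_succ (n k : ℕ) : (k = 0 ∨ n ≤ k) ∨ ∃ i, i + 1 < n ∧ k = i + 1 := by
  rcases k with _ | i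
  · simp
  · rcases lt_or_ge (i + 1) n with h | h
    · exact Or.inr ⟨i, h, rfl⟩
    · exact Or.inl (Or.inr h)

theorem hom_ext {G : Type*} [Group G] {f g : UVB n →* G}
    (hsigma : ∀ k, k + 1 < n → f (sigma n (k + 1)) = g (sigma n (k + 1)))
    (hrho : ∀ k, k + 1 < n → f (rho n (k + 1)) = g (rho n (k + 1))) : f = g := by
  ext (i | i)
  · simpa only [sigma_succ (show i.1 + 1 < n by omega)] using hsigma i (by omega)
  · simpa only [rho_succ (show i.1 + 1 < n by omega)] using hrho i (by omega)

theorem rho_mul_self (n k : ℕ) : rho n k * rho n k = 1 := by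
  obtain h | ⟨i, hi, rfl⟩ := eq_zero_or_le_or_eq_succ n k
  · rw [rho_eq_one h, one_mul]
  · rw [rho_succ hi]
    exact PresentedGroup.one_of_mem (rels := uvbRels n) (Or.inr (Or.inr ⟨_, rfl⟩))

@[simp]
theorem rho_inv (n k : ℕ) : (rho n k)⁻¹ = rho n k :=
  inv_eq_of_mul_eq_one_right (rho_mul_self n k)

theorem sigma_braid (hk : k + 2 < n) :
    sigma n (k + 1) * sigma n (k + 2) * sigma n (k + 1) =
      sigma n (k + 2) * sigma n (k + 1) * sigma n (k + 2) := by
  rw [sigma_succ (show k + 1 < n by omega), sigma_succ (show k + 1 + 1 < n by omega)]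
  exact PresentedGroup.mk_eq_mk_of_mul_inv_mem (Or.inl ⟨⟨k, by omega⟩, ⟨k + 1, by omega⟩, rfl,
    Or.inl rfl⟩)

theorem rho_braid (hk : k + 2 < n) :
    rho n (k + 1) * rho n (k + 2) * rho n (k + 1) =
      rho n (k + 2) * rho n (k + 1) * rho n (k + 2) := by
  rw [rho_succ (show k + 1 < n by omega), rho_succ (show k + 1 + 1 < n by omega)]
  exact PresentedGroup.mk_eq_mk_of_mul_inv_mem (Or.inl ⟨⟨k, by omega⟩, ⟨k + 1, by omega⟩, rfl,
    Or.inr (Or.inl rfl)⟩)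

theorem rho_mul_rho_mul_sigma (hk : k + 2 < n) :
    rho n (k + 1) * rho n (k + 2) * sigma n (k + 1) =
      sigma n (k + 2) * rho n (k + 1) * rho n (k + 2) := by
  rw [rho_succ (show k + 1 < n by omega), rho_succ (show k + 1 + 1 < n by omega),
    sigma_succ (show k + 1 < n by omega), sigma_succ (show k + 1 + 1 < n by omega)]
  exact PresentedGroup.mk_eq_mk_of_mul_inv_mem (Or.inl ⟨⟨k, by omega⟩, ⟨k + 1, by omega⟩, rfl,
    Or.inr (Or.inr (Or.inl rfl))⟩)

theorem rho_mul_sigma_mul_sigma (hk : k + 2 < n) :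
    rho n (k + 1) * sigma n (k + 2) * sigma n (k + 1) =
      sigma n (k + 2) * sigma n (k + 1) * rho n (k + 2) := by
  rw [rho_succ (show k + 1 < n by omega), rho_succ (show k + 1 + 1 < n by omega),
    sigma_succ (show k + 1 < n by omega), sigma_succ (show k + 1 + 1 < n by omega)]
  exact PresentedGroup.mk_eq_mk_of_mul_inv_mem (Or.inl ⟨⟨k, by omega⟩, ⟨k + 1, by omega⟩, rfl,
    Or.inr (Or.inr (Or.inr (Or.inl rfl)))⟩)

theorem rho_mul_sigma_mul_sigma' (hk : k + 2 < n) :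
    rho n (k + 2) * sigma n (k + 1) * sigma n (k + 2) =
      sigma n (k + 1) * sigma n (k + 2) * rho n (k + 1) := by
  rw [rho_succ (show k + 1 < n by omega), rho_succ (show k + 1 + 1 < n by omega),
    sigma_succ (show k + 1 < n by omega), sigma_succ (show k + 1 + 1 < n by omega)]
  exact PresentedGroup.mk_eq_mk_of_mul_inv_mem (Or.inl ⟨⟨k, by omega⟩, ⟨k + 1, by omega⟩, rfl,
    Or.inr (Or.inr (Or.inr (Or.inr rfl)))⟩)

theorem commute_sigma_sigma (h : j + 2 ≤ k ∨ k + 2 ≤ j) : Commute (sigma n j) (sigma n k) := by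
  obtain hj | ⟨j, hj, rfl⟩ := eq_zero_or_le_or_eq_succ n j
  · simp only [sigma_eq_one hj, Commute.one_left]
  obtain hk | ⟨k, hk, rfl⟩ := eq_zero_or_le_or_eq_succ n k
  · simp only [sigma_eq_one hk, Commute.one_right]
  rw [sigma_succ hj, sigma_succ hk]
  have hjk : j + 2 ≤ k ∨ k + 2 ≤ j := by omega
  exact PresentedGroup.mk_eq_mk_of_mul_inv_mem (Or.inr (Or.inl ⟨⟨j, by omega⟩, ⟨k, by omega⟩,
    hjk, Or.inl rfl⟩))

theorem commute_rho_rho (h : j + 2 ≤ k ∨ k + 2 ≤ j) : Commute (rho n j) (rho n k) := by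
  obtain hj | ⟨j, hj, rfl⟩ := eq_zero_or_le_or_eq_succ n j
  · simp only [rho_eq_one hj, Commute.one_left]
  obtain hk | ⟨k, hk, rfl⟩ := eq_zero_or_le_or_eq_succ n k
  · simp only [rho_eq_one hk, Commute.one_right]
  rw [rho_succ hj, rho_succ hk]
  have hjk : j + 2 ≤ k ∨ k + 2 ≤ j := by omega
  exact PresentedGroup.mk_eq_mk_of_mul_inv_mem (Or.inr (Or.inl ⟨⟨j, by omega⟩, ⟨k, by omega⟩,
    hjk, Or.inr (Or.inl rfl)⟩))

theorem commute_sigma_rho (h : j + 2 ≤ k ∨ k + 2 ≤ j) : Commute (sigma n j) (rho n k) := by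
  obtain hj | ⟨j, hj, rfl⟩ := eq_zero_or_le_or_eq_succ n j
  · simp only [sigma_eq_one hj, Commute.one_left]
  obtain hk | ⟨k, hk, rfl⟩ := eq_zero_or_le_or_eq_succ n k
  · simp only [rho_eq_one hk, Commute.one_right]
  rw [sigma_succ hj, rho_succ hk]
  have hjk : j + 2 ≤ k ∨ k + 2 ≤ j := by omega
  exact PresentedGroup.mk_eq_mk_of_mul_inv_mem (Or.inr (Or.inl ⟨⟨j, by omega⟩, ⟨k, by omega⟩,
    hjk, Or.inr (Or.inr rfl)⟩))

theorem incl_sigma (hk : k < n) : incl n (sigma n k) = sigma (n + 1) k := by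
  rcases k with _ | k
  · rw [sigma_eq_one (Or.inl rfl), sigma_eq_one (Or.inl rfl), map_one]
  · rw [sigma_succ hk, sigma_succ (hk.trans n.lt_succ_self)]
    exact PresentedGroup.toGroup.of _

theorem incl_rho (hk : k < n) : incl n (rho n k) = rho (n + 1) k := by
  rcases k with _ | k
  · rw [rho_eq_one (Or.inl rfl), rho_eq_one (Or.inl rfl), map_one]
  · rw [rho_succ hk, rho_succ (hk.trans n.lt_succ_self)]
    exact PresentedGroup.toGroup.of _

theorem commute_map {G : Type*} [Group G] {f : UVB n →* G} {y : G}
    (hsigma : ∀ k, k + 1 < n → Commute (f (sigma n (k + 1))) y)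
    (hrho : ∀ k, k + 1 < n → Commute (f (rho n (k + 1))) y) (x : UVB n) : Commute (f x) y := by
  have h : (MulAut.conj y).toMonoidHom.comp f = f :=
    hom_ext (fun k hk => mul_inv_eq_of_eq_mul (hsigma k hk).eq.symm)
      (fun k hk => mul_inv_eq_of_eq_mul (hrho k hk).eq.symm)
  exact (eq_mul_of_mul_inv_eq (DFunLike.congr_fun h x)).symm

theorem commute_incl_incl_sigma (x : UVB n) :
    Commute (incl (n + 1) (incl n x)) (sigma (n + 2) (n + 1)) := by
  refine commute_map (f := (incl (n + 1)).comp (incl n)) (fun k hk => ?_) (fun k hk => ?_) x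
  · rw [MonoidHom.comp_apply, incl_sigma hk, incl_sigma (by omega)]
    exact commute_sigma_sigma (Or.inl (by omega))
  · rw [MonoidHom.comp_apply, incl_rho hk, incl_rho (by omega)]
    exact (commute_sigma_rho (Or.inr (by omega))).symm

theorem commute_incl_incl_rho (x : UVB n) :
    Commute (incl (n + 1) (incl n x)) (rho (n + 2) (n + 1)) := by
  refine commute_map (f := (incl (n + 1)).comp (incl n)) (fun k hk => ?_) (fun k hk => ?_) x
  · rw [MonoidHom.comp_apply, incl_sigma hk, incl_sigma (by omega)]
    exact commute_sigma_rho (Or.inl (by omega))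
  · rw [MonoidHom.comp_apply, incl_rho hk, incl_rho (by omega)]
    exact commute_rho_rho (Or.inl (by omega))

end Relations

section ViaEmbedding

variable {α β : Type*}

theorem viaEmbedding_eq_iff {f : α ↪ β} {π : Equiv.Perm α} {τ : Equiv.Perm β} :
    π.viaEmbedding f = τ ↔ (∀ a, τ (f a) = f (π a)) ∧ ∀ b ∉ Set.range f, τ b = b := by
  constructor
  · rintro rfl
    exact ⟨π.viaEmbedding_apply f, π.viaEmbedding_apply_of_notMem f⟩
  · rintro ⟨hmem, hnotMem⟩
    ext b
    by_cases hb : b ∈ Set.range f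
    · obtain ⟨a, rfl⟩ := hb
      rw [Equiv.Perm.viaEmbedding_apply, hmem]
    · rw [Equiv.Perm.viaEmbedding_apply_of_notMem _ _ _ hb, hnotMem b hb]

theorem viaEmbedding_swap [DecidableEq α] [DecidableEq β] (f : α ↪ β) (a b : α) :
    (Equiv.swap a b).viaEmbedding f = Equiv.swap (f a) (f b) :=
  viaEmbedding_eq_iff.2 ⟨fun c => (f.injective.swap_apply a b c),
    fun _ hc => Equiv.swap_apply_of_ne_of_ne (fun h => hc ⟨a, h.symm⟩) (fun h => hc ⟨b, h.symm⟩)⟩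

theorem exists_viaEmbedding_eq (f : α ↪ β) {τ : Equiv.Perm β} (hτ : ∀ b ∉ Set.range f, τ b = b) :
    ∃ π : Equiv.Perm α, π.viaEmbedding f = τ := by
  have hrange (b : β) : τ b ∈ Set.range f ↔ b ∈ Set.range f := by
    refine ⟨fun h => ?_, fun h => ?_⟩ <;> by_contra hb
    · exact hb (hτ b hb ▸ h)
    · exact hb ((τ.injective (hτ (τ b) hb)).symm ▸ h)
  let e := Equiv.ofInjective f f.injective
  refine ⟨e.symm.permCongr (τ.subtypePerm hrange), viaEmbedding_eq_iff.2 ⟨fun a => ?_, hτ⟩⟩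
  exact congrArg Subtype.val (e.apply_symm_apply (τ.subtypePerm hrange (e a))).symm

end ViaEmbedding

section Permutation

variable {n k : ℕ}

/-- The transposition `(i, i + 1)` of `Fin n`. -/
def adjSwap (i : Fin (n - 1)) : Equiv.Perm (Fin n) :=
  Equiv.swap ⟨i, by omega⟩ ⟨i + 1, by omega⟩

theorem adjSwap_braid {i j : Fin (n - 1)} (hij : (j : ℕ) = i + 1) :
    adjSwap i * adjSwap j * adjSwap i = adjSwap j * adjSwap i * adjSwap j := by
  obtain ⟨i, hi⟩ := i
  obtain ⟨j, hj⟩ := j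
  obtain rfl : j = i + 1 := hij
  let a : Fin n := ⟨i, by omega⟩
  let b : Fin n := ⟨i + 1, by omega⟩
  let c : Fin n := ⟨i + 2, by omega⟩
  have hab : a ≠ b := by simp [a, b]
  have hbc : b ≠ c := by simp [b, c]
  have hac : a ≠ c := by simp [a, c]
  calc Equiv.swap a b * Equiv.swap b c * Equiv.swap a b
      = Equiv.swap b a * Equiv.swap c b * Equiv.swap b a := by
        rw [Equiv.swap_comm a b, Equiv.swap_comm b c]
    _ = Equiv.swap c a := by
        rw [Equiv.swap_mul_swap_mul_swap hbc.symm hac.symm, Equiv.swap_comm]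
    _ = Equiv.swap b c * Equiv.swap a b * Equiv.swap b c :=
        (Equiv.swap_mul_swap_mul_swap hab hac).symm

theorem commute_adjSwap {i j : Fin (n - 1)} (hij : (i : ℕ) + 2 ≤ j ∨ (j : ℕ) + 2 ≤ i) :
    Commute (adjSwap i) (adjSwap j) := by
  refine (Equiv.Perm.disjoint_swap_swap ?_).commute
  simp [Fin.ext_iff]
  omega

/-- The homomorphism `UVB n →* S_n` sending both `σ_k` and `ρ_k` to the transposition
`(k, k + 1)`; it is the unique `ι` with `IsIota n ι`. -/
def toPerm (n : ℕ) : UVB n →* Equiv.Perm (Fin n) :=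
  PresentedGroup.toGroup (f := Sum.elim adjSwap adjSwap) (by
    rintro r (⟨i, j, hij, h⟩ | ⟨i, j, hij, h⟩ | ⟨i, rfl⟩)
    · rcases h with rfl | rfl | rfl | rfl | rfl <;> rw [map_mul, map_inv, mul_inv_eq_one] <;>
        simp [UVBGen.sg, UVBGen.rg, adjSwap_braid hij]
    · rcases h with rfl | rfl | rfl <;> rw [map_mul, map_inv, mul_inv_eq_one] <;>
        simpa [UVBGen.sg, UVBGen.rg] using (commute_adjSwap hij).eq
    · simp [UVBGen.rg, adjSwap])

theorem toPerm_sigma (hk : k + 1 < n) :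
    toPerm n (sigma n (k + 1)) = Equiv.swap ⟨k, by omega⟩ ⟨k + 1, hk⟩ := by
  rw [sigma_succ hk]
  exact PresentedGroup.toGroup.of _

theorem toPerm_rho (hk : k + 1 < n) :
    toPerm n (rho n (k + 1)) = Equiv.swap ⟨k, by omega⟩ ⟨k + 1, hk⟩ := by
  rw [rho_succ hk]
  exact PresentedGroup.toGroup.of _

theorem _root_.IsIota.eq_toPerm {ι : UVB n →* Equiv.Perm (Fin n)} (hι : IsIota n ι) :
    ι = toPerm n :=
  hom_ext (fun k hk => ((hι (k + 1) (by omega) (by omega)).1.trans (toPerm_sigma hk).symm))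
    (fun k hk => ((hι (k + 1) (by omega) (by omega)).2.trans (toPerm_rho hk).symm))

theorem toPerm_incl (x : UVB n) :
    toPerm (n + 1) (incl n x) = (toPerm n x).viaEmbedding Fin.castSuccEmb := by
  refine DFunLike.congr_fun (f := (toPerm (n + 1)).comp (incl n))
    (g := (Equiv.Perm.viaEmbeddingHom Fin.castSuccEmb).comp (toPerm n))
    (hom_ext (fun k hk => ?_) (fun k hk => ?_)) x
  · simp only [MonoidHom.comp_apply, Equiv.Perm.viaEmbeddingHom_apply]
    rw [incl_sigma hk, toPerm_sigma (by omega), toPerm_sigma hk, viaEmbedding_swap]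
    rfl
  · simp only [MonoidHom.comp_apply, Equiv.Perm.viaEmbeddingHom_apply]
    rw [incl_rho hk, toPerm_rho (by omega), toPerm_rho hk, viaEmbedding_swap]
    rfl

/-- The unrestricted virtual pure braid group `UVP_n`. -/
abbrev pureSubgroup (n : ℕ) : Subgroup (UVB n) := (toPerm n).ker

end Permutation

section VirtualSubgroup

variable {n i j k : ℕ}

theorem B_of_le (h : j ≤ i) : B n i j = 1 := if_neg (by omega)

theorem B_eq_mul_rho (h : i < j) : B n i j = B n (i + 1) j * rho n i := by
  obtain ⟨d, rfl⟩ := Nat.exists_eq_add_of_lt h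
  rcases d with _ | d
  · simp [B]
  · simp [B, show i + 1 < i + (d + 1) + 1 by omega, show i + (d + 1) + 1 - i = d + 2 by omega,
      show i + (d + 1) + 1 - (i + 1) = d + 1 by omega, List.range'_succ, h, mul_assoc]

theorem commute_B {y : UVB n} (h : ∀ l, i ≤ l → l < j → Commute (rho n l) y) :
    Commute (B n i j) y := by
  induction hd : j - i generalizing i with
  | zero => rw [B_of_le (by omega)]; exact Commute.one_left y
  | succ d ih =>
    rw [B_eq_mul_rho (by omega)]
    exact (ih (fun l hl => h l (by omega)) (by omega)).mul_left (h i le_rfl (by omega))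

theorem semiconjBy_rho_mul_rho (hk : k + 2 < n) :
    SemiconjBy (rho n (k + 2) * rho n (k + 1)) (rho n (k + 2)) (rho n (k + 1)) :=
  (rho_braid hk).symm.trans (mul_assoc _ _ _)

theorem semiconjBy_B_rho (hk : 1 ≤ k) (hki : k ≤ i) (hij : i + 1 < j) (hjn : j ≤ n) :
    SemiconjBy (B n k j) (rho n (i + 1)) (rho n i) := by
  induction hd : i - k generalizing k with
  | zero =>
    obtain rfl : k = i := by omega
    obtain ⟨k, rfl⟩ := Nat.exists_eq_succ_of_ne_zero (by omega : k ≠ 0)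
    rw [B_eq_mul_rho (by omega), B_eq_mul_rho (by omega), mul_assoc]
    exact SemiconjBy.mul_left (commute_B fun l hl _ => commute_rho_rho (Or.inr (by omega)))
      (semiconjBy_rho_mul_rho (by omega))
  | succ d ih =>
    rw [B_eq_mul_rho (by omega)]
    exact (ih (by omega) (by omega) (by omega)).mul_left (commute_rho_rho (Or.inl (by omega)))

theorem toPerm_B_apply (hkj : k ≤ j) (hj : j < n) :
    toPerm n (B n (k + 1) (j + 1)) ⟨k, by omega⟩ = ⟨j, hj⟩ := by
  induction hd : j - k generalizing k with
  | zero =>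
    obtain rfl : k = j := by omega
    rw [B_of_le le_rfl, map_one, Equiv.Perm.one_apply]
  | succ d ih =>
    rw [B_eq_mul_rho (by omega), map_mul, toPerm_rho (by omega), Equiv.Perm.mul_apply,
      Equiv.swap_apply_left, ih (by omega) (by omega)]

theorem toPerm_B_apply_of_lt {a : Fin n} (ha : (a : ℕ) < k) (hj : j < n) :
    toPerm n (B n (k + 1) (j + 1)) a = a := by
  induction hd : j - k generalizing k with
  | zero => rw [B_of_le (by omega), map_one, Equiv.Perm.one_apply]
  | succ d ih =>
    rw [B_eq_mul_rho (by omega), map_mul, toPerm_rho (by omega), Equiv.Perm.mul_apply,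
      Equiv.swap_apply_of_ne_of_ne (Fin.ne_of_lt ha) (Fin.ne_of_lt (ha.trans k.lt_succ_self)),
      ih (by omega) (by omega)]

/-- The subgroup generated by the virtual generators `ρ_k`; it is a copy of `S_n`. -/
def virtualSubgroup (n : ℕ) : Subgroup (UVB n) := Subgroup.closure (Set.range (rho n))

theorem rho_mem_virtualSubgroup (n k : ℕ) : rho n k ∈ virtualSubgroup n :=
  Subgroup.subset_closure ⟨k, rfl⟩

theorem B_mem_virtualSubgroup (n i j : ℕ) : B n i j ∈ virtualSubgroup n := by
  induction hd : j - i generalizing i with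
  | zero => rw [B_of_le (by omega)]; exact one_mem _
  | succ d ih =>
    rw [B_eq_mul_rho (by omega)]
    exact mul_mem (ih _ (by omega)) (rho_mem_virtualSubgroup n i)

theorem exists_B_mul_rho (i : ℕ) (hk : k ≤ n) :
    ∃ w ∈ virtualSubgroup n, ∃ l ≤ n, B (n + 1) (k + 1) (n + 1) * rho (n + 1) i =
      incl n w * B (n + 1) (l + 1) (n + 1) := by
  obtain hi | ⟨i, hi, rfl⟩ := eq_zero_or_le_or_eq_succ (n + 1) i
  · exact ⟨1, one_mem _, k, hk, by rw [rho_eq_one hi, map_one, mul_one, one_mul]⟩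
  obtain hik | rfl | rfl | hik : i + 1 < k ∨ k = i + 1 ∨ k = i ∨ k < i := by omega
  · refine ⟨rho n (i + 1), rho_mem_virtualSubgroup n _, k, hk, ?_⟩
    rw [incl_rho (by omega)]
    exact (commute_B fun l hl _ => commute_rho_rho (Or.inr (by omega))).eq
  · refine ⟨1, one_mem _, i, by omega, ?_⟩
    rw [map_one, one_mul, B_eq_mul_rho (i := i + 1) (by omega)]
  · refine ⟨1, one_mem _, k + 1, by omega, ?_⟩
    rw [map_one, one_mul, B_eq_mul_rho (by omega), mul_assoc, rho_mul_self, mul_one]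
  · refine ⟨rho n i, rho_mem_virtualSubgroup n _, k, hk, ?_⟩
    rw [incl_rho (by omega)]
    exact (semiconjBy_B_rho (by omega) hik (by omega) le_rfl).eq

theorem exists_incl_mul_B {x : UVB (n + 1)} (hx : x ∈ virtualSubgroup (n + 1)) :
    ∃ w ∈ virtualSubgroup n, ∃ k ≤ n, x = incl n w * B (n + 1) (k + 1) (n + 1) := by
  have hmul {x : UVB (n + 1)} (i : ℕ) : (∃ w ∈ virtualSubgroup n, ∃ k ≤ n,
      x = incl n w * B (n + 1) (k + 1) (n + 1)) → ∃ w ∈ virtualSubgroup n, ∃ k ≤ n,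
        x * rho (n + 1) i = incl n w * B (n + 1) (k + 1) (n + 1) := by
    rintro ⟨w, hw, k, hk, rfl⟩
    obtain ⟨w', hw', l, hl, h⟩ := exists_B_mul_rho i hk
    exact ⟨w * w', mul_mem hw hw', l, hl, by rw [mul_assoc, h, map_mul, mul_assoc]⟩
  refine Subgroup.closure_induction_right ?_ ?_ ?_ hx
  · exact ⟨1, one_mem _, n, le_rfl, by rw [map_one, one_mul, B_of_le le_rfl]⟩
  · rintro x _ _ ⟨i, rfl⟩
    exact hmul i
  · rintro x _ _ ⟨i, rfl⟩
    rw [rho_inv]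
    exact hmul i

theorem eq_one_of_mem_virtualSubgroup {x : UVB n} (hx : x ∈ virtualSubgroup n)
    (hperm : toPerm n x = 1) : x = 1 := by
  induction n with
  | zero =>
    refine (Subgroup.closure_le (⊥ : Subgroup (UVB 0))).2 ?_ hx
    rintro _ ⟨k, rfl⟩
    exact rho_eq_one (Or.inr k.zero_le)
  | succ n ih =>
    obtain ⟨w, hw, k, hk, rfl⟩ := exists_incl_mul_B hx
    have hkn : k = n := by
      have h : toPerm (n + 1) (incl n w * B (n + 1) (k + 1) (n + 1)) ⟨k, by omega⟩ =
          Fin.last n := by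
        rw [map_mul, Equiv.Perm.mul_apply, toPerm_B_apply hk n.lt_succ_self, toPerm_incl]
        exact Equiv.Perm.viaEmbedding_apply_of_notMem _ _ _ (by simp)
      rw [hperm] at h
      exact congrArg Fin.val h
    subst hkn
    rw [B_of_le le_rfl, mul_one] at hperm ⊢
    rw [toPerm_incl, ← Equiv.Perm.viaEmbeddingHom_apply,
      map_eq_one_iff _ (Equiv.Perm.viaEmbeddingHom_injective _)] at hperm
    rw [ih hw hperm, map_one]

theorem map_toPerm_virtualSubgroup (n : ℕ) : (virtualSubgroup n).map (toPerm n) = ⊤ := by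
  rcases n with _ | n
  · exact Subsingleton.elim _ _
  rw [eq_top_iff, ← Subgroup.toSubmonoid_le, Subgroup.top_toSubmonoid,
    ← Equiv.Perm.mclosure_swap_castSucc_succ, Submonoid.closure_le]
  rintro _ ⟨i, rfl⟩
  exact ⟨rho (n + 1) (i + 1), rho_mem_virtualSubgroup _ _, toPerm_rho (by omega)⟩

theorem bijective_toPerm_virtualSubgroup (n : ℕ) :
    Function.Bijective ((toPerm n).comp (virtualSubgroup n).subtype) := by
  refine ⟨(injective_iff_map_eq_one _).2 fun x hx => ?_, fun π => ?_⟩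
  · exact Subtype.ext (eq_one_of_mem_virtualSubgroup x.2 hx)
  · obtain ⟨x, hx, rfl⟩ := (map_toPerm_virtualSubgroup n).ge (Subgroup.mem_top π)
    exact ⟨⟨x, hx⟩, rfl⟩

/-- The section `S_n →* UVB n` of `toPerm n` sending the transposition `(k, k + 1)` to `ρ_k`,
obtained by inverting `toPerm n` on the virtual subgroup. -/
noncomputable def permSection (n : ℕ) : Equiv.Perm (Fin n) →* UVB n :=
  (virtualSubgroup n).subtype.comp
    (MulEquiv.ofBijective _ (bijective_toPerm_virtualSubgroup n)).symm.toMonoidHom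

@[simp]
theorem toPerm_permSection (π : Equiv.Perm (Fin n)) : toPerm n (permSection n π) = π :=
  (MulEquiv.ofBijective _ (bijective_toPerm_virtualSubgroup n)).apply_symm_apply π

theorem permSection_toPerm {x : UVB n} (hx : x ∈ virtualSubgroup n) :
    permSection n (toPerm n x) = x :=
  congrArg Subtype.val
    ((MulEquiv.ofBijective _ (bijective_toPerm_virtualSubgroup n)).symm_apply_apply ⟨x, hx⟩)

theorem permSection_mem_virtualSubgroup (π : Equiv.Perm (Fin n)) :
    permSection n π ∈ virtualSubgroup n :=
  SetLike.coe_mem _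

theorem permSection_swap (hk : k + 1 < n) :
    permSection n (Equiv.swap ⟨k, by omega⟩ ⟨k + 1, hk⟩) = rho n (k + 1) := by
  rw [← toPerm_rho hk, permSection_toPerm (rho_mem_virtualSubgroup n _)]

end VirtualSubgroup

section PureGenerators

variable {n k : ℕ}

theorem rho_prod_reverse_range' (i j : ℕ) :
    ((List.range' i (j - i)).reverse.map (rho n)).prod = B n i j := by
  rcases lt_or_ge i j with h | h
  · exact (if_pos h).symm
  · rw [B_of_le h, Nat.sub_eq_zero_of_le h]
    rfl

theorem rho_prod_range' (i j : ℕ) :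
    ((List.range' i (j - i)).map (rho n)).prod = (B n i j)⁻¹ := by
  rw [← rho_prod_reverse_range', List.prod_inv_reverse, List.map_map, List.map_reverse,
    List.reverse_reverse]
  exact congrArg List.prod (List.map_congr_left fun l _ => (rho_inv n l).symm)

/-- The element `λ_{i+1,j+1}` of the paper, indexed by `Fin n`. Since `pureGen i i = 1`, most of its
properties hold without assuming `i ≠ j`. -/
def pureGen (i j : Fin n) : UVB n := lam n (i + 1) (j + 1)

theorem pureGen_self (i : Fin n) : pureGen i i = 1 := by
  simp only [pureGen, lam, lt_irrefl, if_false]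

theorem pureGen_of_lt {i j : Fin n} (h : i < j) :
    pureGen i j = B n (i + 2) (j + 1) * (rho n (i + 1) * (sigma n (i + 1))⁻¹) *
      (B n (i + 2) (j + 1))⁻¹ := by
  have hij : (i : ℕ) + 1 < j + 1 := Nat.succ_lt_succ h
  rw [pureGen, lam, if_pos hij, Nat.sub_sub, add_comm 1, rho_prod_reverse_range', rho_prod_range']

theorem pureGen_of_gt {i j : Fin n} (h : j < i) :
    pureGen i j = B n (j + 2) (i + 1) * ((sigma n (j + 1))⁻¹ * rho n (j + 1)) *
      (B n (j + 2) (i + 1))⁻¹ := by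
  have hji : (j : ℕ) + 1 < i + 1 := Nat.succ_lt_succ h
  rw [pureGen, lam, if_neg hji.not_gt, if_pos hji, Nat.sub_sub, add_comm 1,
    rho_prod_reverse_range', rho_prod_range']

theorem pureGen_succ (hk : k + 1 < n) :
    pureGen (⟨k, by omega⟩ : Fin n) ⟨k + 1, hk⟩ = rho n (k + 1) * (sigma n (k + 1))⁻¹ := by
  rw [pureGen_of_lt (Fin.mk_lt_mk.2 k.lt_succ_self), B_of_le le_rfl, one_mul, inv_one, mul_one]

theorem pureGen_succ' (hk : k + 1 < n) :
    pureGen (⟨k + 1, hk⟩ : Fin n) ⟨k, by omega⟩ = (sigma n (k + 1))⁻¹ * rho n (k + 1) := by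
  rw [pureGen_of_gt (Fin.mk_lt_mk.2 k.lt_succ_self), B_of_le le_rfl, one_mul, inv_one, mul_one]

theorem incl_B {i j : ℕ} (hj : j ≤ n) : incl n (B n i j) = B (n + 1) i j := by
  induction hd : j - i generalizing i with
  | zero => rw [B_of_le (by omega), B_of_le (by omega), map_one]
  | succ d ih =>
    rw [B_eq_mul_rho (by omega), map_mul, ih (by omega), incl_rho (by omega),
      ← B_eq_mul_rho (by omega)]

theorem incl_pureGen (i j : Fin n) : incl n (pureGen i j) = pureGen i.castSucc j.castSucc := by
  obtain h | rfl | h := lt_trichotomy i j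
  · rw [pureGen_of_lt h, pureGen_of_lt (Fin.castSucc_lt_castSucc_iff.2 h)]
    simp only [map_mul, map_inv, Fin.val_castSucc]
    rw [incl_B (by omega), incl_rho (by omega), incl_sigma (by omega)]
  · rw [pureGen_self, pureGen_self, map_one]
  · rw [pureGen_of_gt h, pureGen_of_gt (Fin.castSucc_lt_castSucc_iff.2 h)]
    simp only [map_mul, map_inv, Fin.val_castSucc]
    rw [incl_B (by omega), incl_rho (by omega), incl_sigma (by omega)]

theorem pureGen_mem_pureSubgroup (i j : Fin n) : pureGen i j ∈ pureSubgroup n := by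
  obtain h | rfl | h := lt_trichotomy i j
  · rw [pureGen_of_lt h]
    refine (toPerm n).normal_ker.conj_mem _ ?_ _
    rw [MonoidHom.mem_ker, map_mul, map_inv, toPerm_sigma (by omega), toPerm_rho (by omega),
      mul_inv_cancel]
  · exact (pureGen_self i).symm ▸ one_mem _
  · rw [pureGen_of_gt h]
    refine (toPerm n).normal_ker.conj_mem _ ?_ _
    rw [MonoidHom.mem_ker, map_mul, map_inv, toPerm_sigma (by omega), toPerm_rho (by omega),
      inv_mul_cancel]

theorem commute_permSection_viaEmbedding_addNat {y : UVB (n + 2)}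
    (hy : ∀ k, k + 1 < n → Commute (rho (n + 2) (k + 3)) y) (π : Equiv.Perm (Fin n)) :
    Commute (permSection (n + 2) (π.viaEmbedding (Fin.addNatEmb 2))) y := by
  let f : UVB n →* UVB (n + 2) :=
    ((permSection (n + 2)).comp (Equiv.Perm.viaEmbeddingHom (Fin.addNatEmb 2))).comp (toPerm n)
  have hswap (k : ℕ) (hk : k + 1 < n) : permSection (n + 2)
      ((Equiv.swap ⟨k, k.lt_succ_self.trans hk⟩ ⟨k + 1, hk⟩).viaEmbedding (Fin.addNatEmb 2)) =
        rho (n + 2) (k + 3) := by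
    rw [viaEmbedding_swap]
    exact permSection_swap (k := k + 2) (by omega)
  have hsigma (k : ℕ) (hk : k + 1 < n) : f (sigma n (k + 1)) = rho (n + 2) (k + 3) := by
    rw [← hswap k hk, ← toPerm_sigma hk]
    rfl
  have hrho (k : ℕ) (hk : k + 1 < n) : f (rho n (k + 1)) = rho (n + 2) (k + 3) := by
    rw [← hswap k hk, ← toPerm_rho hk]
    rfl
  have h := commute_map (f := f) (fun k hk => (hsigma k hk).symm ▸ hy k hk)
    (fun k hk => (hrho k hk).symm ▸ hy k hk) (permSection n π)
  simpa only [f, MonoidHom.comp_apply, toPerm_permSection,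
    Equiv.Perm.viaEmbeddingHom_apply] using h

theorem commute_permSection_pureGen_zero_one {π : Equiv.Perm (Fin (n + 2))} (h0 : π 0 = 0)
    (h1 : π 1 = 1) : Commute (permSection (n + 2) π) (pureGen 0 1) := by
  have hfix : ∀ a ∉ Set.range (Fin.addNatEmb 2 : Fin n ↪ Fin (n + 2)), π a = a := by
    refine fun a ha => ?_
    rcases lt_or_ge (a : ℕ) 2 with h | h
    · obtain ha | ha : (a : ℕ) = 0 ∨ (a : ℕ) = 1 := by omega
      · exact (Fin.ext ha : a = 0) ▸ h0
      · exact (Fin.ext ha : a = 1) ▸ h1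
    · exact absurd ⟨⟨a - 2, by omega⟩, Fin.ext (Nat.sub_add_cancel h)⟩ ha
  obtain ⟨τ, rfl⟩ := exists_viaEmbedding_eq _ hfix
  refine commute_permSection_viaEmbedding_addNat (fun k _ => ?_) τ
  rw [show (pureGen 0 1 : UVB (n + 2)) = rho (n + 2) 1 * (sigma (n + 2) 1)⁻¹ from
    pureGen_succ (k := 0) (by omega)]
  exact (commute_rho_rho (Or.inr (by omega))).mul_right
    (commute_sigma_rho (Or.inl (by omega))).symm.inv_right

theorem exists_semiconjBy_rho_sigma (hk : k + 1 < n + 2) : ∃ τ : Equiv.Perm (Fin (n + 2)),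
    τ 0 = ⟨k, by omega⟩ ∧ τ 1 = ⟨k + 1, hk⟩ ∧
      SemiconjBy (permSection (n + 2) τ) (rho (n + 2) 1) (rho (n + 2) (k + 1)) ∧
        SemiconjBy (permSection (n + 2) τ) (sigma (n + 2) 1) (sigma (n + 2) (k + 1)) := by
  induction k with
  | zero =>
    refine ⟨1, rfl, rfl, ?_, ?_⟩ <;> rw [map_one] <;> exact SemiconjBy.one_left _
  | succ k ih =>
    obtain ⟨τ, h0, h1, hrho, hsigma⟩ := ih (by omega)
    refine ⟨toPerm (n + 2) (rho _ (k + 1) * rho _ (k + 2)) * τ, ?_, ?_, ?_, ?_⟩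
    · have hfix : Equiv.swap (⟨k + 1, by omega⟩ : Fin (n + 2)) ⟨k + 2, hk⟩ ⟨k, by omega⟩ =
          ⟨k, by omega⟩ :=
        Equiv.swap_apply_of_ne_of_ne (by simp) (by simp)
      rw [Equiv.Perm.mul_apply, h0, map_mul, toPerm_rho (by omega), toPerm_rho hk,
        Equiv.Perm.mul_apply, hfix, Equiv.swap_apply_left]
    · rw [Equiv.Perm.mul_apply, h1, map_mul, toPerm_rho (by omega), toPerm_rho hk,
        Equiv.Perm.mul_apply, Equiv.swap_apply_left,
        Equiv.swap_apply_of_ne_of_ne (Fin.ne_of_gt (Fin.mk_lt_mk.2 (by omega))) (by simp)]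
    all_goals rw [map_mul, permSection_toPerm (mul_mem (rho_mem_virtualSubgroup _ _)
      (rho_mem_virtualSubgroup _ _))]
    · refine SemiconjBy.mul_left ?_ hrho
      exact (rho_braid (by omega)).trans (mul_assoc _ _ _)
    · refine SemiconjBy.mul_left ?_ hsigma
      exact (rho_mul_rho_mul_sigma (by omega)).trans (mul_assoc _ _ _)

theorem exists_semiconjBy_pureGen_zero_one {i j : Fin (n + 2)} (hij : i ≠ j) :
    ∃ τ : Equiv.Perm (Fin (n + 2)), τ 0 = i ∧ τ 1 = j ∧
      SemiconjBy (permSection (n + 2) τ) (pureGen 0 1) (pureGen i j) := by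
  have h01 : (pureGen 0 1 : UVB (n + 2)) = rho (n + 2) 1 * (sigma (n + 2) 1)⁻¹ :=
    pureGen_succ (k := 0) (by omega)
  rw [h01]
  rcases hij.lt_or_gt with h | h
  · obtain ⟨τ, h0, h1, hrho, hsigma⟩ := exists_semiconjBy_rho_sigma (n := n) (k := i) (by omega)
    refine ⟨toPerm (n + 2) (B (n + 2) (i + 2) (j + 1)) * τ, ?_, ?_, ?_⟩
    · rw [Equiv.Perm.mul_apply, h0, toPerm_B_apply_of_lt (Nat.lt_succ_self i) j.is_lt]
    · rw [Equiv.Perm.mul_apply, h1, toPerm_B_apply (by omega) j.is_lt]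
    · rw [map_mul, permSection_toPerm (B_mem_virtualSubgroup _ _ _), pureGen_of_lt h]
      exact (SemiconjBy.conj_mk _ _).mul_left (hrho.mul_right hsigma.inv_right)
  · obtain ⟨τ, h0, h1, hrho, hsigma⟩ := exists_semiconjBy_rho_sigma (n := n) (k := j) (by omega)
    refine ⟨toPerm (n + 2) (B (n + 2) (j + 2) (i + 1) * rho (n + 2) (j + 1)) * τ, ?_, ?_, ?_⟩
    · rw [Equiv.Perm.mul_apply, h0, map_mul, toPerm_rho (by omega), Equiv.Perm.mul_apply,
        Equiv.swap_apply_left, toPerm_B_apply (by omega) i.is_lt]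
    · rw [Equiv.Perm.mul_apply, h1, map_mul, toPerm_rho (by omega), Equiv.Perm.mul_apply,
        Equiv.swap_apply_right, toPerm_B_apply_of_lt (Nat.lt_succ_self j) i.is_lt]
    · rw [map_mul, permSection_toPerm (mul_mem (B_mem_virtualSubgroup _ _ _)
        (rho_mem_virtualSubgroup _ _)), pureGen_of_gt h]
      have hswap : SemiconjBy (rho (n + 2) (j + 1))
          (rho (n + 2) (j + 1) * (sigma (n + 2) (j + 1))⁻¹)
          ((sigma (n + 2) (j + 1))⁻¹ * rho (n + 2) (j + 1)) := by
        rw [SemiconjBy, mul_assoc, rho_mul_self, mul_one, ← mul_assoc, rho_mul_self, one_mul]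
      exact ((SemiconjBy.conj_mk _ _).mul_left hswap).mul_left (hrho.mul_right hsigma.inv_right)

theorem semiconjBy_pureGen (π : Equiv.Perm (Fin n)) (i j : Fin n) :
    SemiconjBy (permSection n π) (pureGen i j) (pureGen (π i) (π j)) := by
  rcases eq_or_ne i j with rfl | hij
  · rw [pureGen_self, pureGen_self]
    exact SemiconjBy.one_right _
  obtain ⟨n, rfl⟩ : ∃ m, n = m + 2 := ⟨n - 2, by omega⟩
  obtain ⟨τ, rfl, rfl, hτ⟩ := exists_semiconjBy_pureGen_zero_one hij
  obtain ⟨τ', h0, h1, hτ'⟩ := exists_semiconjBy_pureGen_zero_one (π.injective.ne hij)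
  have hstab : Commute (permSection (n + 2) (τ'⁻¹ * π * τ)) (pureGen 0 1) :=
    commute_permSection_pureGen_zero_one (by simp [← h0]) (by simp [← h1])
  rw [show π = τ' * (τ'⁻¹ * π * τ) * τ⁻¹ by group, map_mul, map_mul, map_inv]
  simpa [h0, h1] using (hτ'.mul_left hstab).mul_left hτ.inv_symm_left

theorem semiconjBy_rho_pureGen (hk : k + 1 < n) (i j : Fin n) :
    SemiconjBy (rho n (k + 1)) (pureGen i j)
      (pureGen (Equiv.swap ⟨k, by omega⟩ ⟨k + 1, hk⟩ i)
        (Equiv.swap ⟨k, by omega⟩ ⟨k + 1, hk⟩ j)) := by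
  rw [← permSection_swap hk]
  exact semiconjBy_pureGen _ i j

end PureGenerators

section Commutation

theorem commute_of_mixed_relations {G : Type*} [Group G] {a b c r s : G}
    (hrs : r * s * r = s * r * s) (hrb : SemiconjBy r b c) (hrc : SemiconjBy r c b)
    (hsa : SemiconjBy s a c) (hsc : SemiconjBy s c a)
    (h₁ : r * (b * s) * (a * r) = b * s * (a * r) * s)
    (h₂ : s * (a * r) * (b * s) = a * r * (b * s) * r)
    (h₃ : a * r * (b * s) * (a * r) = b * s * (a * r) * (b * s)) :
    Commute a b ∧ Commute a c ∧ Commute b c := by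
  have hcb : c * b = b * c := mul_right_cancel (b := r * s * r) <| calc
    c * b * (r * s * r) = c * (b * r) * s * r := by group
    _ = c * (r * c) * s * r := by rw [hrc.eq]
    _ = (c * r) * (c * s) * r := by group
    _ = r * (b * s) * (a * r) := by rw [← hrb.eq, ← hsa.eq]; group
    _ = b * (s * a) * r * s := by rw [h₁]; group
    _ = b * c * (s * r * s) := by rw [hsa.eq]; group
    _ = b * c * (r * s * r) := by rw [hrs]
  have hac : a * c = c * a := mul_right_cancel (b := r * s * r) <| calc
    a * c * (r * s * r) = a * (c * r) * s * r := by group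
    _ = s * (a * r) * (b * s) := by rw [h₂, ← hrb.eq]; group
    _ = (s * a) * (r * b) * s := by group
    _ = c * (s * c) * r * s := by rw [hsa.eq, hrb.eq]; group
    _ = c * a * (s * r * s) := by rw [hsc.eq]; group
    _ = c * a * (r * s * r) := by rw [hrs]
  have hacb : a * (c * b) = b * (c * a) := mul_right_cancel (b := r * s * r) <| calc
    a * (c * b) * (r * s * r) = a * c * (b * r) * s * r := by group
    _ = a * (c * r) * (c * s) * r := by rw [← hrc.eq]; group
    _ = a * r * (b * s) * (a * r) := by rw [← hrb.eq, ← hsa.eq]; group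
    _ = b * (s * a) * (r * b) * s := by rw [h₃]; group
    _ = b * c * (s * c) * r * s := by rw [hsa.eq, hrb.eq]; group
    _ = b * (c * a) * (s * r * s) := by rw [hsc.eq]; group
    _ = b * (c * a) * (r * s * r) := by rw [hrs]
  refine ⟨mul_right_cancel (b := c) ?_, hac, hcb.symm⟩
  rw [mul_assoc, mul_assoc, ← hcb, hacb, hac]

variable {n k l : ℕ}

theorem inv_pureGen_succ_mul_rho (hk : k + 1 < n) :
    (pureGen (⟨k, by omega⟩ : Fin n) ⟨k + 1, hk⟩)⁻¹ * rho n (k + 1) = sigma n (k + 1) := by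
  rw [pureGen_succ hk]
  group

theorem commute_pureGen_consecutive (hk : k + 2 < n) :
    Commute (pureGen (⟨k, by omega⟩ : Fin n) ⟨k + 1, by omega⟩)
        (pureGen ⟨k + 1, by omega⟩ ⟨k + 2, hk⟩) ∧
      Commute (pureGen (⟨k, by omega⟩ : Fin n) ⟨k + 1, by omega⟩)
        (pureGen ⟨k, by omega⟩ ⟨k + 2, hk⟩) ∧
      Commute (pureGen (⟨k + 1, by omega⟩ : Fin n) ⟨k + 2, hk⟩)
        (pureGen ⟨k, by omega⟩ ⟨k + 2, hk⟩) := by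
  have hleft := semiconjBy_rho_pureGen (k := k) (n := n) (by omega)
  have hright := semiconjBy_rho_pureGen (k := k + 1) (n := n) (by omega)
  have hrb := hleft ⟨k + 1, by omega⟩ ⟨k + 2, hk⟩
  have hrc := hleft ⟨k, by omega⟩ ⟨k + 2, hk⟩
  have hsa := hright ⟨k, by omega⟩ ⟨k + 1, by omega⟩
  have hsc := hright ⟨k, by omega⟩ ⟨k + 2, hk⟩
  simp only [Equiv.swap_apply_left, Equiv.swap_apply_right, ne_eq, Fin.mk.injEq,
    Equiv.swap_apply_of_ne_of_ne, Nat.succ_ne_self, not_false_eq_true, Nat.left_eq_add,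
    Nat.add_eq_left, OfNat.ofNat_ne_zero, add_assoc, Nat.reduceAdd, one_ne_zero] at hrb hrc hsa hsc
  have h₁ : sigma n (k + 1) = _ := (inv_pureGen_succ_mul_rho (n := n) (by omega)).symm
  have h₂ : sigma n (k + 2) = _ := (inv_pureGen_succ_mul_rho (n := n) (by omega)).symm
  have h := commute_of_mixed_relations (rho_braid hk) hrb.inv_right hrc.inv_right hsa.inv_right
    hsc.inv_right (h₁ ▸ h₂ ▸ rho_mul_sigma_mul_sigma hk) (h₁ ▸ h₂ ▸ rho_mul_sigma_mul_sigma' hk)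
    (h₁ ▸ h₂ ▸ sigma_braid hk)
  simpa only [Commute.inv_left_iff, Commute.inv_right_iff] using h

theorem commute_pureGen_far (hkl : k + 2 ≤ l) (hl : l + 1 < n) :
    Commute (pureGen (⟨k, by omega⟩ : Fin n) ⟨k + 1, by omega⟩)
      (pureGen ⟨l, by omega⟩ ⟨l + 1, hl⟩) := by
  rw [pureGen_succ (by omega), pureGen_succ hl]
  have hfar : k + 1 + 2 ≤ l + 1 := by omega
  exact ((commute_rho_rho (Or.inl hfar)).mul_right
      (commute_sigma_rho (Or.inr hfar)).symm.inv_right).mul_left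
    ((commute_sigma_rho (Or.inl hfar)).mul_right
      (commute_sigma_sigma (Or.inl hfar)).inv_right).inv_left

theorem exists_perm_castLE {m n : ℕ} {g : Fin m → Fin n} (hg : Function.Injective g) :
    ∃ (h : m ≤ n) (π : Equiv.Perm (Fin n)), ∀ t, π (Fin.castLE h t) = g t := by
  have h : m ≤ n := by simpa using Fintype.card_le_of_injective g hg
  exact ⟨h, Equiv.Perm.exists_extending_pair _ g (Fin.castLE_injective h) hg⟩

theorem pureGen_perm (π : Equiv.Perm (Fin n)) (i j : Fin n) :
    pureGen (π i) (π j) = permSection n π * pureGen i j * (permSection n π)⁻¹ :=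
  eq_mul_inv_of_mul_eq (semiconjBy_pureGen π i j).eq.symm

theorem commute_pureGen_perm (π : Equiv.Perm (Fin n)) {i j k l : Fin n}
    (h : Commute (pureGen i j) (pureGen k l)) :
    Commute (pureGen (π i) (π j)) (pureGen (π k) (π l)) := by
  simpa only [pureGen_perm, Commute.conj_iff] using h

theorem commute_pureGen_of_common {i j k : Fin n} (hij : i ≠ j) (hik : i ≠ k) (hjk : j ≠ k) :
    Commute (pureGen i j) (pureGen j k) ∧ Commute (pureGen i j) (pureGen i k) ∧
      Commute (pureGen j k) (pureGen i k) := by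
  have hinj : Function.Injective ![i, j, k] := by
    simp [Fin.forall_fin_succ, Function.Injective, hij, hik, hjk, hij.symm, hik.symm, hjk.symm]
  obtain ⟨hn, π, hπ⟩ := exists_perm_castLE hinj
  obtain ⟨h₁, h₂, h₃⟩ := commute_pureGen_consecutive (n := n) (k := 0) hn
  have hi : π ⟨0, by omega⟩ = i := hπ 0
  have hj : π ⟨1, by omega⟩ = j := hπ 1
  have hk : π ⟨2, hn⟩ = k := hπ 2
  rw [← hi, ← hj, ← hk]
  exact ⟨commute_pureGen_perm π h₁, commute_pureGen_perm π h₂, commute_pureGen_perm π h₃⟩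

theorem commute_pureGen_of_disjoint {i j k l : Fin n}
    (h : Function.Injective ![i, j, k, l]) : Commute (pureGen i j) (pureGen k l) := by
  obtain ⟨hn, π, hπ⟩ := exists_perm_castLE h
  have hcomm := commute_pureGen_far (n := n) (k := 0) (l := 2) le_rfl hn
  have hi : π ⟨0, by omega⟩ = i := hπ 0
  have hj : π ⟨1, by omega⟩ = j := hπ 1
  have hk : π ⟨2, by omega⟩ = k := hπ 2
  have hl : π ⟨3, hn⟩ = l := hπ 3
  rw [← hi, ← hj, ← hk, ← hl]
  exact commute_pureGen_perm π hcomm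

theorem commute_pureGen {i j k l : Fin n} (h : s(i, j) ≠ s(k, l)) :
    Commute (pureGen i j) (pureGen k l) := by
  rcases eq_or_ne i j with rfl | hij
  · simp only [pureGen_self, Commute.one_left]
  rcases eq_or_ne k l with rfl | hkl
  · simp only [pureGen_self, Commute.one_right]
  rcases eq_or_ne i k with rfl | hik
  · have hjl : j ≠ l := by rintro rfl; exact h rfl
    exact (commute_pureGen_of_common hij hkl hjl).2.1
  rcases eq_or_ne j l with rfl | hjl
  · exact (commute_pureGen_of_common hik.symm hkl hij).2.2
  rcases eq_or_ne i l with rfl | hil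
  · have hjk : j ≠ k := by rintro rfl; exact h Sym2.eq_swap
    exact (commute_pureGen_of_common hkl hjk.symm hij).1.symm
  rcases eq_or_ne j k with rfl | hjk
  · exact (commute_pureGen_of_common hij hil hkl).1
  · exact commute_pureGen_of_disjoint (by
      simp [Fin.forall_fin_succ, Function.Injective, hij, hkl, hik, hjl, hil, hjk, hij.symm,
        hkl.symm, hik.symm, hjl.symm, hil.symm, hjk.symm])

end Commutation

section Generation

variable {n : ℕ}

theorem eq_top_of_mem {H : Subgroup (UVB n)} (hsigma : ∀ k, k + 1 < n → sigma n (k + 1) ∈ H)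
    (hrho : ∀ k, k + 1 < n → rho n (k + 1) ∈ H) : H = ⊤ := by
  rw [eq_top_iff, ← PresentedGroup.closure_range_of, Subgroup.closure_le]
  rintro _ ⟨i | i, rfl⟩
  · exact sigma_succ (show i.1 + 1 < n by omega) ▸ hsigma i (by omega)
  · exact rho_succ (show i.1 + 1 < n by omega) ▸ hrho i (by omega)

theorem closure_range_pureGen_sup_range_permSection (n : ℕ) :
    Subgroup.closure (Set.range fun p : Fin n × Fin n => pureGen p.1 p.2) ⊔
      (permSection n).range = ⊤ := by
  have hrho : ∀ k, (hk : k + 1 < n) → rho n (k + 1) ∈ (permSection n).range :=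
    fun k hk => ⟨_, permSection_swap hk⟩
  refine eq_top_of_mem (fun k hk => ?_) (fun k hk => Subgroup.mem_sup_right (hrho k hk))
  rw [← inv_pureGen_succ_mul_rho hk]
  exact Subgroup.mul_mem_sup (inv_mem (Subgroup.subset_closure ⟨(_, _), rfl⟩)) (hrho k hk)

instance normal_closure_range_pureGen (n : ℕ) :
    (Subgroup.closure (Set.range fun p : Fin n × Fin n => pureGen p.1 p.2)).Normal := by
  rw [← Subgroup.normalizer_eq_top_iff, eq_top_iff,
    ← closure_range_pureGen_sup_range_permSection n]
  refine sup_le Subgroup.le_normalizer (Subgroup.le_normalizer_closure_iff.mpr ?_)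
  rintro _ ⟨π, rfl⟩ _ ⟨⟨i, j⟩, rfl⟩
  rw [← pureGen_perm]
  exact Subgroup.subset_closure ⟨(_, _), rfl⟩

theorem pureSubgroup_eq_closure (n : ℕ) :
    pureSubgroup n =
      Subgroup.closure (Set.range fun p : Fin n × Fin n => pureGen p.1 p.2) := by
  set K := Subgroup.closure (Set.range fun p : Fin n × Fin n => pureGen p.1 p.2)
  have hK : K ≤ pureSubgroup n := by
    rw [Subgroup.closure_le]
    rintro _ ⟨⟨i, j⟩, rfl⟩
    exact pureGen_mem_pureSubgroup i j
  refine le_antisymm (fun x hx => ?_) hK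
  have hx' : x ∈ K ⊔ (permSection n).range :=
    closure_range_pureGen_sup_range_permSection n ▸ Subgroup.mem_top x
  obtain ⟨y, hy, _, ⟨π, rfl⟩, rfl⟩ := Subgroup.mem_sup_of_normal_left.mp hx'
  have hπ : π = 1 := by
    rw [← toPerm_permSection π]
    exact (Subgroup.mul_mem_cancel_left _ (hK hy)).mp hx
  rwa [hπ, map_one, mul_one]

end Generation

section EdgeSubgroup

variable {n : ℕ} {E F : Set (Sym2 (Fin n))}

/-- The subgroup of pure braids generated by the `λ_{i,j}` whose unordered index pair lies in `E`.
It is used to express that pure braids supported on disjoint sets of pairs commute. -/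
def edgeSubgroup (E : Set (Sym2 (Fin n))) : Subgroup (UVB n) :=
  Subgroup.closure {x | ∃ i j, s(i, j) ∈ E ∧ pureGen i j = x}

theorem pureGen_mem_edgeSubgroup {i j : Fin n} (h : s(i, j) ∈ E) : pureGen i j ∈ edgeSubgroup E :=
  Subgroup.subset_closure ⟨i, j, h, rfl⟩

theorem edgeSubgroup_le {H : Subgroup (UVB n)} :
    edgeSubgroup E ≤ H ↔ ∀ i j, s(i, j) ∈ E → pureGen i j ∈ H := by
  simp only [edgeSubgroup, Subgroup.closure_le, Set.ofPred_subset, SetLike.mem_coe]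
  exact ⟨fun h i j hij => h _ ⟨i, j, hij, rfl⟩, by rintro h _ ⟨i, j, hij, rfl⟩; exact h i j hij⟩

theorem edgeSubgroup_univ (n : ℕ) :
    edgeSubgroup (Set.univ : Set (Sym2 (Fin n))) = pureSubgroup n := by
  rw [pureSubgroup_eq_closure, edgeSubgroup]
  congr 1
  ext x
  simp

theorem edgeSubgroup_le_pureSubgroup : edgeSubgroup E ≤ pureSubgroup n :=
  edgeSubgroup_le.mpr fun i j _ => pureGen_mem_pureSubgroup i j

theorem edgeSubgroup_union : edgeSubgroup (E ∪ F) = edgeSubgroup E ⊔ edgeSubgroup F := by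
  refine le_antisymm (edgeSubgroup_le.mpr fun i j h => ?_) (sup_le ?_ ?_)
  · exact h.elim (fun hE => Subgroup.mem_sup_left (pureGen_mem_edgeSubgroup hE))
      (fun hF => Subgroup.mem_sup_right (pureGen_mem_edgeSubgroup hF))
  · exact edgeSubgroup_le.mpr fun i j h => pureGen_mem_edgeSubgroup (Or.inl h)
  · exact edgeSubgroup_le.mpr fun i j h => pureGen_mem_edgeSubgroup (Or.inr h)

theorem commute_of_mem_edgeSubgroup (hEF : Disjoint E F) {x y : UVB n} (hx : x ∈ edgeSubgroup E)
    (hy : y ∈ edgeSubgroup F) : Commute x y := by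
  have h : edgeSubgroup F ≤ Subgroup.centralizer (edgeSubgroup E) := by
    refine edgeSubgroup_le.mpr fun k l hkl => ?_
    rw [edgeSubgroup, Subgroup.centralizer_closure]
    rintro _ ⟨i, j, hij, rfl⟩
    exact commute_pureGen (hEF.ne_of_mem hij hkl)
  exact h hy x hx

theorem map_edgeSubgroup {m : ℕ} (f : UVB n →* UVB m) (g : Fin n → Fin m)
    (hf : ∀ i j, f (pureGen i j) = pureGen (g i) (g j)) :
    (edgeSubgroup E).map f = edgeSubgroup (Sym2.map g '' E) := by
  refine le_antisymm (Subgroup.map_le_iff_le_comap.mpr <| edgeSubgroup_le.mpr fun i j h => ?_)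
    (edgeSubgroup_le.mpr ?_)
  · rw [Subgroup.mem_comap, hf]
    exact pureGen_mem_edgeSubgroup ⟨_, h, rfl⟩
  · rintro i j ⟨⟨a, b⟩, hab, h⟩
    rcases Sym2.eq_iff.mp h with ⟨rfl, rfl⟩ | ⟨rfl, rfl⟩
    · exact ⟨_, pureGen_mem_edgeSubgroup hab, hf a b⟩
    · exact ⟨_, pureGen_mem_edgeSubgroup (Sym2.eq_swap ▸ hab), hf b a⟩

end EdgeSubgroup

section Splitting

open scoped commutatorElement

variable {n : ℕ}

theorem range_sym2Map_succAbove (p : Fin (n + 1)) :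
    Set.range (Sym2.map p.succAbove) = {e | p ∉ e} := by
  ext ⟨i, j⟩
  constructor
  · rintro ⟨e, he⟩
    rw [Set.mem_ofPred_eq, ← he, Sym2.mem_map]
    rintro ⟨a, -, ha⟩
    exact p.succAbove_ne a ha
  · intro h
    obtain ⟨hi, hj⟩ : p ≠ i ∧ p ≠ j := by simpa [Sym2.mem_iff] using h
    obtain ⟨a, rfl⟩ := Fin.exists_succAbove_eq hi.symm
    obtain ⟨b, rfl⟩ := Fin.exists_succAbove_eq hj.symm
    exact ⟨s(a, b), rfl⟩

theorem image_sym2Map_succAbove_setOf_mem (p : Fin (n + 1)) (a : Fin n) :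
    Sym2.map p.succAbove '' {e | a ∈ e} = {e | p.succAbove a ∈ e ∧ p ∉ e} := by
  ext e
  constructor
  · rintro ⟨e, ha, rfl⟩
    exact ⟨Sym2.mem_map.mpr ⟨a, ha, rfl⟩, (range_sym2Map_succAbove p).le ⟨e, rfl⟩⟩
  · rintro ⟨ha, hp⟩
    obtain ⟨e, rfl⟩ := (range_sym2Map_succAbove p).ge hp
    obtain ⟨b, hb, hba⟩ := Sym2.mem_map.mp ha
    exact ⟨e, Fin.succAbove_right_injective hba ▸ hb, rfl⟩

/-- The subgroup generated by the `λ_{i,j}` that involve the last strand. -/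
abbrev starSubgroup (n : ℕ) : Subgroup (UVB (n + 1)) := edgeSubgroup {e | Fin.last n ∈ e}

/-- The subgroup generated by `λ_{n+1,n+2}` and `λ_{n+2,n+1}`. -/
abbrev lastPairSubgroup (n : ℕ) : Subgroup (UVB (n + 2)) :=
  edgeSubgroup {s((Fin.last n).castSucc, Fin.last (n + 1))}

/-- The inclusion `UVB (n + 1) → UVB (n + 2)` that leaves out the penultimate strand instead of
the last one: the conjugate of `incl` by `ρ_{n+1}`. -/
def skipIncl (n : ℕ) : UVB (n + 1) →* UVB (n + 2) :=
  (MulAut.conj (rho (n + 2) (n + 1))).toMonoidHom.comp (incl (n + 1))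

theorem skipIncl_apply (x : UVB (n + 1)) :
    skipIncl n x = rho (n + 2) (n + 1) * incl (n + 1) x * (rho (n + 2) (n + 1))⁻¹ := rfl

theorem skipIncl_pureGen (i j : Fin (n + 1)) :
    skipIncl n (pureGen i j) =
      pureGen ((Fin.last n).castSucc.succAbove i) ((Fin.last n).castSucc.succAbove j) := by
  have hswap (i : Fin (n + 1)) : Equiv.swap (Fin.last n).castSucc (Fin.last (n + 1)) i.castSucc =
      (Fin.last n).castSucc.succAbove i := by
    rcases eq_or_ne i (Fin.last n) with rfl | hi
    · rw [Equiv.swap_apply_left, Fin.succAbove_castSucc_self, Fin.succ_last]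
    · rw [Equiv.swap_apply_of_ne_of_ne (by simpa using hi) (Fin.castSucc_ne_last i),
        Fin.succAbove_castSucc_of_lt _ _ (Fin.lt_last_iff_ne_last.mpr hi)]
  rw [skipIncl_apply, incl_pureGen, ← hswap, ← hswap]
  exact mul_inv_eq_of_eq_mul (semiconjBy_rho_pureGen (Nat.lt_succ_self _) _ _).eq

theorem map_incl_pureSubgroup (n : ℕ) :
    (pureSubgroup n).map (incl n) = edgeSubgroup {e | Fin.last n ∉ e} := by
  rw [← edgeSubgroup_univ, map_edgeSubgroup _ _ incl_pureGen, Set.image_univ, ← Fin.succAbove_last,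
    range_sym2Map_succAbove]

theorem map_skipIncl_starSubgroup (n : ℕ) :
    (starSubgroup n).map (skipIncl n) =
      edgeSubgroup {e | Fin.last (n + 1) ∈ e ∧ (Fin.last n).castSucc ∉ e} := by
  rw [map_edgeSubgroup _ _ skipIncl_pureGen, image_sym2Map_succAbove_setOf_mem,
    Fin.succAbove_castSucc_self, Fin.succ_last]

theorem commute_incl_skipIncl {v u : UVB (n + 1)} (hv : v ∈ pureSubgroup (n + 1))
    (hu : u ∈ starSubgroup n) : Commute (incl (n + 1) v) (skipIncl n u) := by
  have hv' := map_incl_pureSubgroup (n + 1) ▸ Subgroup.mem_map_of_mem _ hv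
  have hu' := map_skipIncl_starSubgroup n ▸ Subgroup.mem_map_of_mem _ hu
  refine commute_of_mem_edgeSubgroup (Set.disjoint_left.mpr fun e he he' => ?_) hv' hu'
  exact he he'.1

theorem commute_incl_lastPair {v : UVB (n + 1)} {q : UVB (n + 2)} (hv : v ∈ pureSubgroup (n + 1))
    (hq : q ∈ lastPairSubgroup n) : Commute (incl (n + 1) v) q := by
  have hv' := map_incl_pureSubgroup (n + 1) ▸ Subgroup.mem_map_of_mem _ hv
  refine commute_of_mem_edgeSubgroup (Set.disjoint_singleton_right.mpr ?_) hv' hq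
  exact fun h => h (Sym2.mem_mk_right _ _)

theorem commute_skipIncl_lastPair {u : UVB (n + 1)} {q : UVB (n + 2)} (hu : u ∈ starSubgroup n)
    (hq : q ∈ lastPairSubgroup n) : Commute (skipIncl n u) q := by
  have hu' := map_skipIncl_starSubgroup n ▸ Subgroup.mem_map_of_mem _ hu
  refine commute_of_mem_edgeSubgroup (Set.disjoint_singleton_right.mpr ?_) hu' hq
  exact fun h => h.2 (Sym2.mem_mk_left _ _)

theorem pureSubgroup_eq_sup (n : ℕ) :
    pureSubgroup (n + 2) = (pureSubgroup (n + 1)).map (incl (n + 1)) ⊔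
      ((starSubgroup n).map (skipIncl n) ⊔ lastPairSubgroup n) := by
  rw [map_incl_pureSubgroup, map_skipIncl_starSubgroup, ← edgeSubgroup_union,
    ← edgeSubgroup_union, ← edgeSubgroup_univ]
  congr 1
  refine (Set.eq_univ_of_forall fun e => ?_).symm
  by_cases hlast : Fin.last (n + 1) ∈ e
  · by_cases hpen : (Fin.last n).castSucc ∈ e
    · have hne : (Fin.last n).castSucc ≠ Fin.last (n + 1) := Fin.castSucc_ne_last _
      exact Or.inr (Or.inr ((Sym2.mem_and_mem_iff hne).mp ⟨hpen, hlast⟩))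
    · exact Or.inr (Or.inl ⟨hlast, hpen⟩)
  · exact Or.inl hlast

/-- The decomposition of `UVP_{n+2}` as a product of three commuting subgroups: the pure braids on
the first `n + 1` strands, those generated by the `λ_{i,n+2}`, `λ_{n+2,i}` with `i ≤ n`
(parametrized by `starSubgroup n` through `skipIncl`), and `lastPairSubgroup n`. -/
def splitHom (n : ℕ) :
    pureSubgroup (n + 1) × (starSubgroup n × lastPairSubgroup n) →* UVB (n + 2) :=
  ((incl (n + 1)).comp (pureSubgroup (n + 1)).subtype).noncommCoprod
    (((skipIncl n).comp (starSubgroup n).subtype).noncommCoprod (lastPairSubgroup n).subtype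
      fun u q => commute_skipIncl_lastPair u.2 q.2)
    fun v x => (commute_incl_skipIncl v.2 x.1.2).mul_right (commute_incl_lastPair v.2 x.2.2)

theorem splitHom_apply (v : pureSubgroup (n + 1)) (u : starSubgroup n) (q : lastPairSubgroup n) :
    splitHom n (v, u, q) = incl (n + 1) v * (skipIncl n u * q) := rfl

theorem range_splitHom (n : ℕ) : (splitHom n).range = pureSubgroup (n + 2) := by
  refine (MonoidHom.noncommCoprod_range _ _ _).trans ?_
  rw [MonoidHom.noncommCoprod_range, pureSubgroup_eq_sup, MonoidHom.range_comp,
    MonoidHom.range_comp, Subgroup.range_subtype, Subgroup.range_subtype, Subgroup.range_subtype]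

theorem map_mem_commutator {G H : Type*} [Group G] [Group H] {f : G →* H} {K : Subgroup H}
    (hf : ∀ x, f x ∈ K) {x : G} (hx : x ∈ ⁅(⊤ : Subgroup G), (⊤ : Subgroup G)⁆) : f x ∈ ⁅K, K⁆ := by
  have hK : (⊤ : Subgroup G).map f ≤ K := Subgroup.map_le_iff_le_comap.mpr fun x _ => hf x
  refine Subgroup.commutator_mono hK hK ?_
  exact Subgroup.map_commutator ⊤ ⊤ f ▸ Subgroup.mem_map_of_mem f hx

theorem exists_splitHom_eq_of_mem_commutator {γ : UVB (n + 2)}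
    (hγ : γ ∈ ⁅pureSubgroup (n + 2), pureSubgroup (n + 2)⁆) :
    ∃ x, splitHom n x = γ ∧
      (x.1 : UVB (n + 1)) ∈ ⁅pureSubgroup (n + 1), pureSubgroup (n + 1)⁆ ∧
      (x.2.1 : UVB (n + 1)) ∈ ⁅pureSubgroup (n + 1), pureSubgroup (n + 1)⁆ := by
  have hrange : pureSubgroup (n + 2) ≤ (⊤ : Subgroup _).map (splitHom n) := by
    rw [← MonoidHom.range_eq_map, range_splitHom]
  obtain ⟨x, hx, rfl⟩ := Subgroup.commutator_le_map_commutator hrange hrange hγ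
  refine ⟨x, rfl, ?_, ?_⟩
  · exact map_mem_commutator (f := (pureSubgroup (n + 1)).subtype.comp (.fst _ _))
      (fun y => y.1.2) hx
  · exact map_mem_commutator
      (f := (starSubgroup n).subtype.comp ((MonoidHom.fst _ _).comp (.snd _ _)))
      (fun y => edgeSubgroup_le_pureSubgroup y.2.1.2) hx

end Splitting

section MarkovMoves

variable {n : ℕ}

theorem markov_mul_comm (a b : UVB n) : Markov ⟨n, a * b⟩ ⟨n, b * a⟩ := by
  simpa only [← mul_assoc, mul_inv_cancel_right] using (MarkovBase.conj n (a * b) b).markov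

/- A stabilization by `ρ_{n+1} y`, followed by a conjugation that moves `y` across `β` and a
virtual destabilization, multiplies `β` by `z`. -/
theorem markov_mul_right_of_semiconjBy {β z : UVB (n + 1)} {y : UVB (n + 2)}
    (hstab : Markov ⟨n + 1, β⟩ ⟨n + 2, incl (n + 1) β * (rho (n + 2) (n + 1) * y)⟩)
    (hy : SemiconjBy (incl (n + 1) β * rho (n + 2) (n + 1)) (incl (n + 1) z) y) :
    Markov ⟨n + 1, β⟩ ⟨n + 1, β * z⟩ := calc
  Markov ⟨n + 1, β⟩ ⟨n + 2, incl (n + 1) β * rho (n + 2) (n + 1) * y⟩ := mul_assoc _ _ y ▸ hstab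
  Markov _ ⟨n + 2, y * (incl (n + 1) β * rho (n + 2) (n + 1))⟩ := markov_mul_comm _ _
  Markov _ ⟨n + 2, incl (n + 1) z * (incl (n + 1) β * rho (n + 2) (n + 1))⟩ :=
    hy.eq ▸ markov_mul_comm _ _
  Markov _ ⟨n + 1, z * β⟩ := by
    rw [← mul_assoc, ← map_mul]
    exact (MarkovBase.stabVirt (n + 1) (z * β)).markov.symm
  Markov _ ⟨n + 1, β * z⟩ := markov_mul_comm _ _

theorem pureGen_penultimate_last (n : ℕ) :
    pureGen (Fin.last n).castSucc (Fin.last (n + 1)) =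
      rho (n + 2) (n + 1) * (sigma (n + 2) (n + 1))⁻¹ :=
  pureGen_succ (Nat.lt_succ_self (n + 1))

theorem pureGen_last_penultimate (n : ℕ) :
    pureGen (Fin.last (n + 1)) (Fin.last n).castSucc =
      (sigma (n + 2) (n + 1))⁻¹ * rho (n + 2) (n + 1) :=
  pureGen_succ' (Nat.lt_succ_self (n + 1))

theorem markov_stabilize_pureGen (β : UVB (n + 1)) :
    Markov ⟨n + 1, β⟩ ⟨n + 2, incl (n + 1) β *
      (rho (n + 2) (n + 1) * pureGen (Fin.last n).castSucc (Fin.last (n + 1)))⟩ := by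
  rw [pureGen_penultimate_last, ← mul_assoc (rho _ _), rho_mul_self, one_mul]
  exact (MarkovBase.stabNeg (n + 1) β).markov

theorem markov_stabilize_pureGen_inv (β : UVB (n + 1)) :
    Markov ⟨n + 1, β⟩ ⟨n + 2, incl (n + 1) β *
      (rho (n + 2) (n + 1) * (pureGen (Fin.last (n + 1)) (Fin.last n).castSucc)⁻¹)⟩ := by
  rw [pureGen_last_penultimate, mul_inv_rev, inv_inv, mul_inv_cancel_left]
  exact (MarkovBase.stabPos (n + 1) β).markov

theorem commute_incl_incl_pureGen (x : UVB n) {i j : Fin (n + 2)}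
    (h : s(i, j) = s((Fin.last n).castSucc, Fin.last (n + 1))) :
    Commute (incl (n + 1) (incl n x)) (pureGen i j) := by
  have hsigma := (commute_incl_incl_sigma x).inv_right
  have hrho := commute_incl_incl_rho x
  rcases Sym2.eq_iff.mp h with ⟨rfl, rfl⟩ | ⟨rfl, rfl⟩
  · exact pureGen_penultimate_last n ▸ hrho.mul_right hsigma
  · exact pureGen_last_penultimate n ▸ hsigma.mul_right hrho

theorem semiconjBy_rho_skipIncl_pureGen {i j : Fin (n + 2)}
    (hij : s(i, j) = s((Fin.last n).castSucc, Fin.last (n + 1))) :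
    SemiconjBy (rho (n + 3) (n + 1)) (skipIncl (n + 1) (pureGen i j))
      (pureGen i.succ j.succ) := by
  have hswap : ∀ k ∈ s((Fin.last n).castSucc, Fin.last (n + 1)),
      Equiv.swap ⟨n, by omega⟩ ⟨n + 1, by omega⟩ ((Fin.last (n + 1)).castSucc.succAbove k) =
        k.succ := by
    intro k hk
    rcases Sym2.mem_iff.mp hk with rfl | rfl
    · rw [Fin.succAbove_castSucc_of_lt _ _ (Fin.castSucc_lt_last _)]
      exact Equiv.swap_apply_left _ _
    · rw [Fin.succAbove_castSucc_self]
      refine Equiv.swap_apply_of_ne_of_ne ?_ ?_ <;>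
        simp only [ne_eq, Fin.ext_iff, Fin.val_succ, Fin.val_last] <;> omega
  rw [skipIncl_pureGen, ← hswap i (hij ▸ Sym2.mem_mk_left i j),
    ← hswap j (hij ▸ Sym2.mem_mk_right i j)]
  exact semiconjBy_rho_pureGen (n := n + 3) (k := n) (by omega) _ _

theorem semiconjBy_pureGen_succ (α : UVB (n + 1)) {q : UVB (n + 2)} (hq : q ∈ lastPairSubgroup n)
    {i j : Fin (n + 2)} (hij : s(i, j) = s((Fin.last n).castSucc, Fin.last (n + 1))) :
    SemiconjBy
      (incl (n + 2) (incl (n + 1) α * rho (n + 2) (n + 1) * q) * rho (n + 3) (n + 2))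
      (incl (n + 2) (pureGen i j)) (pureGen i.succ j.succ) := by
  have hα : Commute (incl (n + 2) (incl (n + 1) α)) (pureGen i.succ j.succ) := by
    refine commute_incl_incl_pureGen α ?_
    simpa only [Sym2.map_mk, Fin.succ_castSucc, Fin.succ_last] using
      congrArg (Sym2.map Fin.succ) hij
  have hstar : pureGen i j ∈ starSubgroup (n + 1) :=
    pureGen_mem_edgeSubgroup (hij ▸ Sym2.mem_mk_right _ _)
  have hq' : Commute (incl (n + 2) q) (skipIncl (n + 1) (pureGen i j)) :=
    commute_incl_skipIncl (edgeSubgroup_le_pureSubgroup hq) hstar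
  rw [map_mul, map_mul, incl_rho (by omega)]
  exact ((SemiconjBy.mul_left hα (semiconjBy_rho_skipIncl_pureGen hij)).mul_left hq').mul_left
    (SemiconjBy.conj_mk _ _)

theorem markov_stabilize_mul_pureGen (α : UVB (n + 1)) {q : UVB (n + 2)}
    (hq : q ∈ lastPairSubgroup n) {i j : Fin (n + 2)}
    (hij : s(i, j) = s((Fin.last n).castSucc, Fin.last (n + 1))) :
    Markov ⟨n + 2, incl (n + 1) α * rho (n + 2) (n + 1) * q⟩
      ⟨n + 2, incl (n + 1) α * rho (n + 2) (n + 1) * (q * pureGen i j)⟩ := by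
  have hqij : q * pureGen i j ∈ lastPairSubgroup n := mul_mem hq (pureGen_mem_edgeSubgroup hij)
  rcases Sym2.eq_iff.mp hij with ⟨rfl, rfl⟩ | ⟨rfl, rfl⟩
  · rw [← mul_assoc]
    exact markov_mul_right_of_semiconjBy (markov_stabilize_pureGen _)
      (semiconjBy_pureGen_succ α hq hij)
  · have h := markov_mul_right_of_semiconjBy (markov_stabilize_pureGen_inv _)
      (map_inv (incl (n + 2)) _ ▸ (semiconjBy_pureGen_succ α hqij hij).inv_right)
    simpa only [mul_assoc, mul_inv_cancel, mul_one] using h.symm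

theorem markov_stabilize_lastPair (α : UVB (n + 1)) {q : UVB (n + 2)}
    (hq : q ∈ lastPairSubgroup n) :
    Markov ⟨n + 1, α⟩ ⟨n + 2, incl (n + 1) α * rho (n + 2) (n + 1) * q⟩ := by
  induction hq using Subgroup.closure_induction_right with
  | one => exact (mul_one (incl (n + 1) α * _)).symm ▸ (MarkovBase.stabVirt (n + 1) α).markov
  | mul_right x hx y hy ih =>
    obtain ⟨i, j, hij, rfl⟩ := hy
    exact ih.trans (markov_stabilize_mul_pureGen α hx hij)
  | mul_inv_cancel x hx y hy ih =>
    have hxy := mul_mem hx (inv_mem (Subgroup.subset_closure hy))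
    obtain ⟨i, j, hij, rfl⟩ := hy
    have h := markov_stabilize_mul_pureGen α hxy hij
    rw [inv_mul_cancel_right] at h
    exact ih.trans h.symm

end MarkovMoves

section Reduction

open scoped commutatorElement

variable {n m k : ℕ}

/-- `α` reduces to `β` if every element of the coset `α [UVP_n, UVP_n]` is fused Markov equivalent
to an element of `β [UVP_m, UVP_m]`: the invariant carried through the construction of `ϱ*`. -/
def Reduces (α : UVB n) (β : UVB m) : Prop :=
  ∀ γ ∈ ⁅pureSubgroup n, pureSubgroup n⁆,
    ∃ δ ∈ ⁅pureSubgroup m, pureSubgroup m⁆, Markov ⟨n, α * γ⟩ ⟨m, β * δ⟩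

theorem Reduces.refl (α : UVB n) : Reduces α α :=
  fun γ hγ => ⟨γ, hγ, Relation.EqvGen.refl _⟩

theorem Reduces.trans {α : UVB n} {β : UVB m} {κ : UVB k} (h : Reduces α β) (h' : Reduces β κ) :
    Reduces α κ := by
  intro γ hγ
  obtain ⟨δ, hδ, hαβ⟩ := h γ hγ
  obtain ⟨ε, hε, hβκ⟩ := h' δ hδ
  exact ⟨ε, hε, hαβ.trans hβκ⟩

theorem reduces_conj (α g : UVB n) : Reduces α (g * α * g⁻¹) := by
  intro γ hγ
  refine ⟨g * γ * g⁻¹, Subgroup.Normal.conj_mem inferInstance _ hγ g, ?_⟩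
  simpa only [mul_assoc, inv_mul_cancel_left] using (MarkovBase.conj n (α * γ) g).markov

theorem markov_destabilize (a : UVB (n + 1))
    (x : pureSubgroup (n + 1) × (starSubgroup n × lastPairSubgroup n)) :
    Markov ⟨n + 2, incl (n + 1) a * rho (n + 2) (n + 1) * splitHom n x⟩
      ⟨n + 1, x.1 * a * x.2.1⟩ := by
  obtain ⟨⟨v, hv⟩, ⟨u, hu⟩, ⟨q, hq⟩⟩ := x
  have hvuq : Commute (incl (n + 1) v) (skipIncl n u * q) :=
    (commute_incl_skipIncl hv hu).mul_right (commute_incl_lastPair hv hq)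
  have hrho : rho (n + 2) (n + 1) * skipIncl n u = incl (n + 1) u * rho (n + 2) (n + 1) := by
    rw [skipIncl_apply, rho_inv, ← mul_assoc, ← mul_assoc, rho_mul_self, one_mul]
  calc
    Markov ⟨n + 2, incl (n + 1) a * rho (n + 2) (n + 1) * splitHom n (⟨v, hv⟩, ⟨u, hu⟩, ⟨q, hq⟩)⟩
        ⟨n + 2, incl (n + 1) a * rho (n + 2) (n + 1) * (skipIncl n u * q) * incl (n + 1) v⟩ := by
      rw [splitHom_apply, hvuq.eq, ← mul_assoc]
      exact Relation.EqvGen.refl _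
    Markov _ ⟨n + 2, incl (n + 1) v *
        (incl (n + 1) a * rho (n + 2) (n + 1) * (skipIncl n u * q))⟩ := markov_mul_comm _ _
    Markov _ ⟨n + 2, incl (n + 1) (v * a * u) * rho (n + 2) (n + 1) * q⟩ := by
      rw [map_mul, map_mul, mul_assoc _ (incl (n + 1) u), ← hrho]
      simp only [mul_assoc]
      exact Relation.EqvGen.refl _
    Markov _ ⟨n + 1, v * a * u⟩ := (markov_stabilize_lastPair _ hq).symm

theorem reduces_destabilize (a : UVB (n + 1))
    (x : pureSubgroup (n + 1) × (starSubgroup n × lastPairSubgroup n)) :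
    Reduces (incl (n + 1) a * rho (n + 2) (n + 1) * splitHom n x)
      (x.1 * a * x.2.1 : UVB (n + 1)) := by
  intro γ hγ
  obtain ⟨y, rfl, hg, hh⟩ := exists_splitHom_eq_of_mem_commutator hγ
  set b : UVB (n + 1) := a * x.2.1 with hb
  refine ⟨b⁻¹ * y.1 * b⁻¹⁻¹ * y.2.1,
    mul_mem (Subgroup.Normal.conj_mem inferInstance _ hg _) hh, ?_⟩
  have h := markov_destabilize a (x * y)
  rw [map_mul, ← mul_assoc] at h
  convert h using 2
  simp only [Prod.fst_mul, Prod.snd_mul, Subgroup.coe_mul, hb]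
  group

end Reduction

section Orbits

theorem card_cycleType_swap_mul_of_isCycle {α : Type*} [Fintype α] [DecidableEq α]
    {c : Equiv.Perm α} (hc : c.IsCycle) {x : α} (hx : c x ≠ x) :
    (Equiv.swap x (c x) * c).cycleType.card + c.support.card =
      (Equiv.swap x (c x) * c).support.card + 2 := by
  by_cases hcc : c (c x) = x
  · have hswap : c = Equiv.swap x (c x) := hc.eq_swap_of_apply_apply_eq_self hx hcc
    have hone : Equiv.swap x (c x) * c = 1 := by rw [← hswap, hswap, Equiv.swap_mul_self]
    have hcard : c.support.card = 2 := by rw [hswap, Equiv.Perm.card_support_swap hx.symm]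
    rw [hone, hcard, Equiv.Perm.cycleType_one, Equiv.Perm.support_one, Multiset.card_zero,
      Finset.card_empty]
  · have hcard : (Equiv.swap x (c x) * c).support.card + 1 = c.support.card := by
      rw [Equiv.Perm.support_swap_mul_eq _ _ hcc, Finset.sdiff_singleton_eq_erase,
        Finset.card_erase_add_one (Equiv.Perm.mem_support.2 hx)]
    rw [(hc.swap_mul hx hcc).cycleType, Multiset.card_singleton]
    omega

theorem card_cycleType_swap_mul {α : Type*} [Fintype α] [DecidableEq α] {π : Equiv.Perm α}
    {x : α} (hx : π x ≠ x) :
    (Equiv.swap x (π x) * π).cycleType.card + π.support.card =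
      π.cycleType.card + (Equiv.swap x (π x) * π).support.card + 1 := by
  obtain ⟨c, g, rfl, hc, hdisj, hcx⟩ :
      ∃ c g, π = c * g ∧ c.IsCycle ∧ c.Disjoint g ∧ c x = π x := by
    have hmem : π.cycleOf x ∈ π.cycleFactorsFinset :=
      Equiv.Perm.cycleOf_mem_cycleFactorsFinset_iff.2 (Equiv.Perm.mem_support.2 hx)
    have hdisj := (Equiv.Perm.disjoint_mul_inv_of_mem_cycleFactorsFinset hmem).symm
    exact ⟨π.cycleOf x, π * (π.cycleOf x)⁻¹, by rw [hdisj.commute.eq, inv_mul_cancel_right],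
      Equiv.Perm.isCycle_cycleOf π hx, hdisj, π.cycleOf_apply_self x⟩
  rw [← hcx] at hx ⊢
  have hdisj' : (Equiv.swap x (c x) * c).Disjoint g :=
    hdisj.mono (fun _ hy => (Equiv.Perm.mem_support_swap_mul_imp_mem_support_ne hy).1) le_rfl
  have h := card_cycleType_swap_mul_of_isCycle hc hx
  rw [← mul_assoc, hdisj.cycleType_mul, hdisj'.cycleType_mul, hdisj.card_support_mul,
    hdisj'.card_support_mul, Multiset.card_add, Multiset.card_add, hc.cycleType,
    Multiset.card_singleton]
  omega

theorem cycleType_viaEmbedding {α β : Type*} [Fintype α] [DecidableEq α] [Fintype β]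
    [DecidableEq β] (f : α ↪ β) (π : Equiv.Perm α) :
    (π.viaEmbedding f).cycleType = π.cycleType := by
  let _ := Classical.decPred (· ∈ Set.range f)
  exact Equiv.Perm.cycleType_extendDomain (Equiv.ofInjective f f.injective)

variable {n : ℕ}

theorem numOrbits_add_card_support (π : Equiv.Perm (Fin n)) :
    numOrbits π + π.support.card = n + π.cycleType.card := by
  have h : (Finset.univ.filter fun x => π x = x).card + π.support.card = n := by
    rw [Equiv.Perm.support, Finset.card_filter_add_card_filter_not, Finset.card_univ,
      Fintype.card_fin]
  rw [numOrbits]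
  omega

theorem numOrbits_one (n : ℕ) : numOrbits (1 : Equiv.Perm (Fin n)) = n := by
  simpa using numOrbits_add_card_support (1 : Equiv.Perm (Fin n))

theorem numOrbits_conj (g π : Equiv.Perm (Fin n)) : numOrbits (g * π * g⁻¹) = numOrbits π := by
  have h := numOrbits_add_card_support (g * π * g⁻¹)
  rw [Equiv.Perm.cycleType_conj, Equiv.Perm.card_support_conj, ← numOrbits_add_card_support π]
    at h
  exact Nat.add_right_cancel h

theorem numOrbits_swap_mul {π : Equiv.Perm (Fin n)} {x : Fin n} (hx : π x ≠ x) :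
    numOrbits (Equiv.swap x (π x) * π) = numOrbits π + 1 := by
  have h := card_cycleType_swap_mul hx
  have hπ := numOrbits_add_card_support π
  have hswap := numOrbits_add_card_support (Equiv.swap x (π x) * π)
  omega

theorem numOrbits_viaEmbedding_castSucc (π : Equiv.Perm (Fin n)) :
    numOrbits (π.viaEmbedding Fin.castSuccEmb) = numOrbits π + 1 := by
  have h := numOrbits_add_card_support (π.viaEmbedding Fin.castSuccEmb)
  rw [← Equiv.Perm.sum_cycleType, cycleType_viaEmbedding, Equiv.Perm.sum_cycleType] at h
  have hπ := numOrbits_add_card_support π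
  omega

theorem numOrbits_viaEmbedding_castSucc_mul_swap (π : Equiv.Perm (Fin (n + 1))) :
    numOrbits (π.viaEmbedding Fin.castSuccEmb *
      Equiv.swap (Fin.last n).castSucc (Fin.last (n + 1))) = numOrbits π := by
  set τ := π.viaEmbedding Fin.castSuccEmb with hτ
  have hlast : τ (Fin.last (n + 1)) = Fin.last (n + 1) :=
    π.viaEmbedding_apply_of_notMem _ _ (by simp)
  set ω := τ * Equiv.swap (Fin.last n).castSucc (Fin.last (n + 1)) with hω
  have hωlast : ω (Fin.last (n + 1)) = (π (Fin.last n)).castSucc := by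
    rw [hω, Equiv.Perm.mul_apply, Equiv.swap_apply_right]
    exact π.viaEmbedding_apply Fin.castSuccEmb _
  have hτω : Equiv.swap (Fin.last (n + 1)) (ω (Fin.last (n + 1))) * ω = τ := by
    nth_rewrite 1 [← hlast]
    rw [hω, Equiv.Perm.mul_apply, Equiv.swap_apply_right, ← mul_assoc,
      Equiv.swap_mul_eq_mul_swap, Equiv.Perm.coe_inv, τ.symm_apply_apply, τ.symm_apply_apply,
      Equiv.swap_comm, mul_assoc, Equiv.swap_mul_self, mul_one]
  have h := numOrbits_swap_mul (hωlast.trans_ne (Fin.castSucc_ne_last _))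
  rw [hτω, hτ, numOrbits_viaEmbedding_castSucc] at h
  exact Nat.succ_injective h.symm

end Orbits

section Induction

theorem exists_conj_eq_viaEmbedding_mul_swap {n : ℕ} {π : Equiv.Perm (Fin (n + 2))}
    (hπ : π ≠ 1) :
    ∃ (g : Equiv.Perm (Fin (n + 2))) (τ : Equiv.Perm (Fin (n + 1))), g * π * g⁻¹ =
      τ.viaEmbedding Fin.castSuccEmb * Equiv.swap (Fin.last n).castSucc (Fin.last (n + 1)) := by
  obtain ⟨x, hx⟩ : ∃ x, π x ≠ x := by
    by_contra! h
    exact hπ (Equiv.ext h)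
  obtain ⟨g, hgx : g x = _, hgπx : g (π x) = _⟩ := MulAction.is_two_pretransitive_iff.1
    (Equiv.Perm.isMultiplyPretransitive (Fin (n + 2)) 2) hx.symm
    (Fin.castSucc_ne_last (Fin.last n))
  obtain ⟨τ, hτ⟩ := exists_viaEmbedding_eq Fin.castSuccEmb
    (τ := g * π * g⁻¹ * Equiv.swap (Fin.last n).castSucc (Fin.last (n + 1))) (fun b hb => by
      obtain rfl : b = Fin.last (n + 1) :=
        (Fin.eq_castSucc_or_eq_last b).resolve_left fun ⟨a, ha⟩ => hb ⟨a, ha.symm⟩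
      rw [Equiv.Perm.mul_apply, Equiv.swap_apply_right, Equiv.Perm.mul_apply,
        Equiv.Perm.mul_apply, ← hgx, Equiv.Perm.coe_inv, g.symm_apply_apply, hgπx])
  exact ⟨g, τ, by rw [hτ, Equiv.mul_swap_mul_self]⟩

theorem exists_reduces_of_toPerm_ne_one {n : ℕ} {α : UVB (n + 2)} (hα : toPerm (n + 2) α ≠ 1) :
    ∃ β : UVB (n + 1), numOrbits (toPerm (n + 1) β) = numOrbits (toPerm (n + 2) α) ∧
      Reduces α β := by
  obtain ⟨g, τ, hg⟩ := exists_conj_eq_viaEmbedding_mul_swap hα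
  set α' := permSection (n + 2) g * α * (permSection (n + 2) g)⁻¹ with hα'
  have hperm : toPerm (n + 2) α' = τ.viaEmbedding Fin.castSuccEmb *
      Equiv.swap (Fin.last n).castSucc (Fin.last (n + 1)) := by
    rw [← hg, hα', map_mul, map_mul, map_inv, toPerm_permSection]
  set a := permSection (n + 1) τ
  have hpure : (incl (n + 1) a * rho (n + 2) (n + 1))⁻¹ * α' ∈ (splitHom n).range := by
    rw [range_splitHom, MonoidHom.mem_ker, map_mul, map_inv, inv_mul_eq_one, hperm, map_mul,
      toPerm_incl, toPerm_permSection, toPerm_rho (by omega)]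
    rfl
  obtain ⟨x, hx⟩ := hpure
  refine ⟨x.1 * a * x.2.1, ?_, (reduces_conj α (permSection (n + 2) g)).trans ?_⟩
  · have hv : toPerm (n + 1) x.1 = 1 := x.1.2
    have hu : toPerm (n + 1) x.2.1 = 1 := edgeSubgroup_le_pureSubgroup x.2.1.2
    rw [map_mul, map_mul, hv, hu, one_mul, mul_one, toPerm_permSection,
      ← numOrbits_viaEmbedding_castSucc_mul_swap, ← hg, numOrbits_conj]
  · rw [← hα', ← mul_inv_cancel_left (incl (n + 1) a * rho (n + 2) (n + 1)) α', ← hx]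
    exact reduces_destabilize a x

theorem exists_mem_pureSubgroup_reduces {n : ℕ} (α : UVB n) :
    ∃ β : UVB (numOrbits (toPerm n α)),
      β ∈ pureSubgroup (numOrbits (toPerm n α)) ∧ Reduces α β := by
  suffices h : ∃ m, m = numOrbits (toPerm n α) ∧ ∃ β ∈ pureSubgroup m, Reduces α β by
    obtain ⟨_, rfl, h⟩ := h
    exact h
  induction n with
  | zero => exact ⟨0, by rw [Subsingleton.elim (toPerm 0 α) 1, numOrbits_one], α,
      Subsingleton.elim _ _, Reduces.refl α⟩
  | succ n ih =>
    by_cases hα : toPerm (n + 1) α = 1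
    · exact ⟨n + 1, by rw [hα, numOrbits_one], α, hα, Reduces.refl α⟩
    rcases n with _ | n
    · exact absurd (Subsingleton.elim (α := Equiv.Perm (Fin 1)) _ _) hα
    obtain ⟨β, hβ, hαβ⟩ := exists_reduces_of_toPerm_ne_one hα
    obtain ⟨m, hm, κ, hκ, hβκ⟩ := ih β
    exact ⟨m, hm.trans hβ, κ, hκ, hαβ.trans hβκ⟩

end Induction

section Choice

open scoped commutatorElement

theorem exists_forall_rel_of_setoid {T : Type*} (r : Setoid T) {P : T → T → Prop}
    (h : ∀ x₀, ∃ y₀, ∀ x, r x₀ x → ∃ y, r y₀ y ∧ P x y) :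
    ∃ f : T → T, (∀ x, P x (f x)) ∧ ∀ x x', r x x' → r (f x) (f x') := by
  choose y₀ hy₀ using h
  choose! g hrel hP using hy₀
  let rep (x : T) : T := (Quotient.mk r x).out
  have hrep (x : T) : r (rep x) x := Quotient.exact (Quotient.out_eq _)
  refine ⟨fun x => g (rep x) x, fun x => hP _ _ (hrep x), fun x x' hx => ?_⟩
  have hxx' : rep x = rep x' := congrArg Quotient.out (Quotient.sound hx)
  exact r.trans (r.symm (hrel _ _ (hrep x))) (hxx' ▸ hrel _ _ (hrep x'))

/-- The relation of having the same strand number `n` and lying in the same coset of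
`[UVP_n, UVP_n]`, on the disjoint union of the groups `UVB n`. -/
def commutatorSetoid : Setoid (Σ n, UVB n) where
  r x y := ∃ δ ∈ ⁅pureSubgroup x.1, pureSubgroup x.1⁆, y = ⟨x.1, x.2 * δ⟩
  iseqv :=
    { refl := fun x => ⟨1, one_mem _, by rw [mul_one]⟩
      symm := by
        rintro ⟨n, x⟩ _ ⟨δ, hδ, rfl⟩
        exact ⟨δ⁻¹, inv_mem hδ, by rw [mul_inv_cancel_right]⟩
      trans := by
        rintro ⟨n, x⟩ _ _ ⟨δ, hδ, rfl⟩ ⟨ε, hε, rfl⟩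
        exact ⟨δ * ε, mul_mem hδ hε, by rw [mul_assoc]⟩ }

theorem exists_cast_eq_mul {x y : Σ n, UVB n} (h : commutatorSetoid x y) :
    ∃ (h : y.1 = x.1) (δ : UVB x.1), δ ∈ ⁅pureSubgroup x.1, pureSubgroup x.1⁆ ∧
      cast (congrArg UVB h) y.2 = x.2 * δ := by
  obtain ⟨δ, hδ, rfl⟩ := h
  exact ⟨rfl, δ, hδ, rfl⟩

/-- `y` is an admissible value `ϱ*(x)` in the main construction. -/
structure IsPurification (x y : Σ n, UVB n) : Prop where
  numOrbits : y.1 = numOrbits (toPerm x.1 x.2)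
  mem_pureSubgroup : y.2 ∈ pureSubgroup y.1
  markov : Markov x y
  eq_self : x.2 ∈ pureSubgroup x.1 → y = x

theorem isPurification_self {n : ℕ} {α : UVB n} (hα : α ∈ pureSubgroup n) :
    IsPurification ⟨n, α⟩ ⟨n, α⟩ where
  numOrbits := by rw [MonoidHom.mem_ker.1 hα, numOrbits_one]
  mem_pureSubgroup := hα
  markov := Relation.EqvGen.refl _
  eq_self _ := rfl

theorem exists_isPurification (x₀ : Σ n, UVB n) :
    ∃ y₀, ∀ x, commutatorSetoid x₀ x → ∃ y, commutatorSetoid y₀ y ∧ IsPurification x y := by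
  obtain ⟨n, α⟩ := x₀
  have hle (n : ℕ) : ⁅pureSubgroup n, pureSubgroup n⁆ ≤ pureSubgroup n :=
    Subgroup.commutator_le_right _ _
  by_cases hα : α ∈ pureSubgroup n
  · refine ⟨⟨n, α⟩, ?_⟩
    rintro _ ⟨γ, hγ, rfl⟩
    exact ⟨_, ⟨γ, hγ, rfl⟩, isPurification_self (mul_mem hα (hle n hγ))⟩
  · obtain ⟨β, hβ, hαβ⟩ := exists_mem_pureSubgroup_reduces α
    refine ⟨⟨_, β⟩, ?_⟩
    rintro _ ⟨γ, hγ, rfl⟩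
    obtain ⟨δ, hδ, hmarkov⟩ := hαβ γ hγ
    refine ⟨_, ⟨δ, hδ, rfl⟩, ?_, mul_mem hβ (hle _ hδ), hmarkov, fun hαγ => ?_⟩
    · rw [map_mul, MonoidHom.mem_ker.1 (hle n hγ), mul_one]
    · exact absurd ((Subgroup.mul_mem_cancel_right _ (hle n hγ)).1 hαγ) hα

end Choice

end UVB

/-! ## Statement 12 -/

/-- Remark 2 of the paper.  There is a map ϱ* as in the main
construction (each `α ∈ UVB n` is sent to a pure braid `ϱ*(α) ∈ UVP m`, fused Markov
equivalent to α, with `m` the number of orbits of ι(α), and ϱ*(α) = α for pure α)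
which moreover satisfies: if `α = βγ` with `γ ∈ [UVP n, UVP n]`, then
`ϱ*(α) = ϱ*(β)·δ` for some `δ ∈ [UVP m, UVP m]`. -/
theorem statement12 (ι : ∀ n, UVB n →* Equiv.Perm (Fin n)) (hι : ∀ n, IsIota n (ι n)) :
    ∃ f : (Σ n, UVB n) → (Σ n, UVB n),
      (∀ n, 2 ≤ n → ∀ α : UVB n,
        (f ⟨n, α⟩).1 = numOrbits (ι n α) ∧
        (f ⟨n, α⟩).2 ∈ (ι (f ⟨n, α⟩).1).ker ∧
        Markov ⟨n, α⟩ (f ⟨n, α⟩) ∧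
        (α ∈ (ι n).ker → f ⟨n, α⟩ = ⟨n, α⟩)) ∧
      (∀ n, 2 ≤ n → ∀ (β γ : UVB n), γ ∈ ⁅(ι n).ker, (ι n).ker⁆ →
        ∃ (h : (f ⟨n, β * γ⟩).1 = (f ⟨n, β⟩).1) (δ : UVB (f ⟨n, β⟩).1),
          δ ∈ ⁅(ι (f ⟨n, β⟩).1).ker, (ι (f ⟨n, β⟩).1).ker⁆ ∧
          cast (congrArg UVB h) (f ⟨n, β * γ⟩).2 = (f ⟨n, β⟩).2 * δ) := by
  obtain rfl : ι = UVB.toPerm := funext fun n => (hι n).eq_toPerm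
  obtain ⟨f, hf, hcoset⟩ :=
    UVB.exists_forall_rel_of_setoid UVB.commutatorSetoid UVB.exists_isPurification
  refine ⟨f, fun n _ α => ?_, fun n _ β γ hγ => ?_⟩
  · have h := hf ⟨n, α⟩
    exact ⟨h.numOrbits, h.mem_pureSubgroup, h.markov, h.eq_self⟩
  · exact UVB.exists_cast_eq_mul (hcoset ⟨n, β⟩ ⟨n, β * γ⟩ ⟨γ, hγ, rfl⟩)
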